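/- arXiv:0911.3565 — 3 statements merged into one kernel-verified Lean document; each statement's English description precedes it below -/
import Mathlib

section
/- Let A be an Artinian Gorenstein local K-algebra with Hilbert function HF_A = {1,n,n,1} (i.e. HF_A(0) = HF_A(3) = 1, HF_A(1) = HF_A(2) = n, and m^4 = 0). Then A is canonically graded: A is isomorphic as a K-algebra to its associated graded ring gr_m(A) = ⊕_{i≥0} m^i/m^{i+1}. -/
/-- The maximal ideal `M = (x_1, …, x_n)` of `R = K[[x_1,…,x_n]]`,
i.e. the ideal of power series with zero constant term. -/
noncomputable def mxR (K : Type*) [Field K] (n : ℕ) : Ideal (MvPowerSeries (Fin n) K) :=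
  RingHom.ker (MvPowerSeries.constantCoeff (σ := Fin n) (R := K))

/-- The Hilbert function of `A = R/I` where `R = K[[x_1,…,x_n]]`:
`HF_A(i) = dim_K (m^i/m^(i+1)) = dim_K A/m^(i+1) - dim_K A/m^i`, computed via
`A/m^j = R/(I + M^j)` where `M = (x_1,…,x_n)`. -/
noncomputable def hilbQ {K : Type*} [Field K] {n : ℕ}
    (I : Ideal (MvPowerSeries (Fin n) K)) (i : ℕ) : ℕ :=
  Module.finrank K (MvPowerSeries (Fin n) K ⧸ (I ⊔ mxR K n ^ (i + 1))) -
    Module.finrank K (MvPowerSeries (Fin n) K ⧸ (I ⊔ mxR K n ^ i))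

/-- `dim_K` of the socle `(0 :_A m)` of `A = R/I`, where `m = M/I` is the
maximal ideal of `A`.  The Artinian local ring `A = R/I` is Gorenstein iff
this equals `1`. -/
noncomputable def socDimQ {K : Type*} [Field K] {n : ℕ}
    (I : Ideal (MvPowerSeries (Fin n) K)) : ℕ :=
  Module.finrank K
    ((Submodule.colon (⊥ : Ideal (MvPowerSeries (Fin n) K ⧸ I))
      ((mxR K n).map (Ideal.Quotient.mk I))).restrictScalars K)

/-- The total degree `|α| = α 1 + ⋯ + α n` of a multi-index. -/
def degM {n : ℕ} (α : Fin n →₀ ℕ) : ℕ := ∑ i, α i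

/-- The ideal `I^*` of `R` generated by the initial forms `f^*` of the elements
`f ∈ I` (for `f ≠ 0` of order `d`, `f^*` is the degree-`d` homogeneous component
of `f`; the set below consists of all such initial forms, together with `0`).
For an ideal `I` with `R/I` Artinian, `R/I^*` is (canonically isomorphic to) the
associated graded ring `gr_m(R/I) = ⊕_{i ≥ 0} m^i/m^(i+1)` of `A = R/I`. -/
noncomputable def initialIdeal {K : Type*} [Field K] {n : ℕ}
    (I : Ideal (MvPowerSeries (Fin n) K)) : Ideal (MvPowerSeries (Fin n) K) :=
  Ideal.span { g | ∃ f ∈ I, ∃ d : ℕ,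
    (∀ α : Fin n →₀ ℕ, degM α < d → MvPowerSeries.coeff α f = 0) ∧
    (∀ α : Fin n →₀ ℕ, MvPowerSeries.coeff α g =
      if degM α = d then MvPowerSeries.coeff α f else 0) }

/-!
Let `A = R/I` have maximal ideal `m = (x 1, …, x n)`, and let `φ : A → K` be linear and nonzero on
the one-dimensional socle. Since `dim m² = n + 1`, duality yields elements of `m²` whose products
with the `x i` have arbitrarily prescribed values under `φ`. Choosing `z i ∈ m²` with
`φ (x j * z i) = -φ (x i * x j) / 2` completes the square: as `m⁴ = 0`, the new coordinates
`x i + z i` satisfy `φ ((x i + z i) * (x j + z j)) = 0`.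

Lift `x i ↦ x i + z i` to an endomorphism `σ` of `R`, which is the identity on `M^d / M^(d+1)`. If
`q` is the quadratic initial form of `f ∈ I`, then the class of `σ q - f` lies in `m³`, hence in the
socle, and `φ` kills it, so `σ q ∈ I`; initial forms of degree at least `3` need only `M⁴ ≤ I`, and
there are none of degree at most `1`. So `σ` maps `I^*` into `I`, and clearing initial forms one at
a time gives `σ⁻¹ I = I^*`. As `σ` is onto modulo `I`, it induces `R/I^* ≃ R/I`.
-/

section PowerSeries

open MvPowerSeries

open scoped Pointwise

variable {σ R : Type*}

lemma range_X_pow [CommSemiring R] (d : ℕ) :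
    Set.range (X : σ → MvPowerSeries σ R) ^ d =
      (monomial · 1) '' {β : σ →₀ ℕ | β.degree = d} := by
  rw [← Set.image_univ, Finsupp.image_pow_eq_finsuppProd_image]
  simp only [Set.subset_univ, and_true]
  exact Set.image_congr fun β _ ↦ by simpa using (monomial_eq β fun _ ↦ (1 : R)).symm

lemma le_order_iff [Semiring R] {d : ℕ} {f : MvPowerSeries σ R} :
    (d : ℕ∞) ≤ f.order ↔ ∀ α : σ →₀ ℕ, α.degree < d → coeff α f = 0 :=
  ⟨fun h _ hα ↦ coeff_of_lt_order (lt_of_lt_of_le (mod_cast hα) h), nat_le_order⟩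

lemma exists_eq_sum_monomial_mul [CommSemiring R] {d : ℕ} {f : MvPowerSeries σ R}
    (hf : d ≤ f.order) (hfin : {β : σ →₀ ℕ | β.degree = d}.Finite) :
    ∃ g : (σ →₀ ℕ) → MvPowerSeries σ R, f = ∑ β ∈ hfin.toFinset, monomial β 1 * g β := by
  classical
  -- each exponent `α` of `f` is assigned to one divisor `b α` of degree `d`
  choose! b hb using fun (α : σ →₀ ℕ) (hα : d ≤ α.degree) ↦ α.exists_le_degree_eq d hα
  let g (β : σ →₀ ℕ) : MvPowerSeries σ R :=
    fun γ ↦ if b (β + γ) = β then coeff (β + γ) f else 0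
  have coeff_g : ∀ β γ, coeff γ (g β) = if b (β + γ) = β then coeff (β + γ) f else 0 :=
    fun _ _ ↦ rfl
  refine ⟨g, ?_⟩
  ext α
  have hterm : ∀ β, coeff α (monomial β 1 * g β) =
      if β ≤ α ∧ b α = β then coeff α f else 0 := fun β ↦ by
    rw [coeff_monomial_mul, one_mul, ite_and]
    split_ifs with hβ
    · rw [coeff_g, add_tsub_cancel_of_le hβ, if_pos ‹_›]
    · rw [coeff_g, add_tsub_cancel_of_le hβ, if_neg ‹_›]
    · rfl
  rw [map_sum, Finset.sum_congr rfl fun β _ ↦ hterm β]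
  by_cases hα : d ≤ α.degree
  · obtain ⟨hle, hdeg⟩ := hb α hα
    rw [Finset.sum_eq_single (b α) (fun β _ hne ↦ if_neg fun h ↦ hne h.2.symm)
      (fun h ↦ absurd (hfin.mem_toFinset.2 hdeg) h), if_pos ⟨hle, rfl⟩]
  · rw [le_order_iff.1 hf α (by lia)]
    simp

lemma mem_span_range_X_pow_of_le_order [CommSemiring R] [Finite σ] {d : ℕ}
    {f : MvPowerSeries σ R} (hf : d ≤ f.order) :
    f ∈ Ideal.span (Set.range (X : σ → MvPowerSeries σ R) ^ d) := by
  obtain ⟨g, hg⟩ := exists_eq_sum_monomial_mul hf (Finsupp.finite_of_degree_eq d)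
  rw [hg]
  refine Ideal.sum_mem _ fun β hβ ↦ Ideal.mul_mem_right _ _ (Ideal.subset_span ?_)
  rw [range_X_pow]
  exact ⟨β, by simpa using hβ, rfl⟩

lemma span_range_X_pow [CommSemiring R] (d : ℕ) :
    Ideal.span (Set.range (X : σ → MvPowerSeries σ R)) ^ d =
      Ideal.span (Set.range (X : σ → MvPowerSeries σ R) ^ d) :=
  Submodule.span_pow _ d

lemma mem_span_range_X_pow_iff [CommSemiring R] [Finite σ] {d : ℕ} {f : MvPowerSeries σ R} :
    f ∈ Ideal.span (Set.range (X : σ → MvPowerSeries σ R)) ^ d ↔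
      ∀ α : σ →₀ ℕ, α.degree < d → coeff α f = 0 := by
  rw [span_range_X_pow]
  refine ⟨fun hf ↦ ?_, fun hf ↦ mem_span_range_X_pow_of_le_order (le_order_iff.2 hf)⟩
  induction hf using Submodule.span_induction with
  | mem f hf =>
    rw [range_X_pow] at hf
    obtain ⟨β, rfl, rfl⟩ := hf
    exact fun α hα ↦ coeff_monomial_ne (by rintro rfl; exact hα.false) 1
  | zero => simp
  | add f g _ _ hf hg => exact fun α hα ↦ by rw [map_add, hf α hα, hg α hα, add_zero]
  | smul a f _ hf =>
    rw [← le_order_iff] at hf ⊢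
    exact hf.trans (le_add_self.trans le_order_mul)

lemma linearMap_homogeneousComponent_eq_zero [CommSemiring R] [Finite σ] {N : Type*}
    [AddCommMonoid N] [Module R N] {d : ℕ} {ψ : MvPowerSeries σ R →ₗ[R] N}
    (hψ : ∀ g ∈ Set.range (X : σ → MvPowerSeries σ R) ^ d, ψ g = 0) (f : MvPowerSeries σ R) :
    ψ (homogeneousComponent d f) = 0 := by
  classical
  have hfin := Finsupp.finite_of_degree_eq (σ := σ) d
  have hsum : homogeneousComponent d f =
      ∑ β ∈ hfin.toFinset, coeff β f • monomial β (1 : R) := by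
    ext α
    simp [coeff_homogeneousComponent, coeff_monomial]
  rw [hsum, map_sum]
  refine Finset.sum_eq_zero fun β hβ ↦ ?_
  have hmem : monomial β (1 : R) ∈ Set.range (X : σ → MvPowerSeries σ R) ^ d := by
    rw [range_X_pow]
    exact ⟨β, by simpa using hβ, rfl⟩
  rw [map_smul, hψ _ hmem, smul_zero]

end PowerSeries

section InitialIdeal

open MvPowerSeries

variable {K : Type*} [Field K] {n d : ℕ} {I J : Ideal (MvPowerSeries (Fin n) K)}
  {f : MvPowerSeries (Fin n) K}

lemma degM_eq_degree (α : Fin n →₀ ℕ) : degM α = α.degree :=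
  (Finsupp.degree_eq_sum α).symm

lemma mxR_eq_span : mxR K n = Ideal.span (Set.range X) := by
  ext f
  rw [← pow_one (Ideal.span _), mem_span_range_X_pow_iff, mxR, RingHom.mem_ker]
  simp [Finsupp.degree_eq_zero_iff]

lemma mem_mxR_pow_iff : f ∈ mxR K n ^ d ↔ ∀ α : Fin n →₀ ℕ, α.degree < d → coeff α f = 0 := by
  rw [mxR_eq_span, mem_span_range_X_pow_iff]

lemma homogeneousComponent_mem_mxR_pow (f : MvPowerSeries (Fin n) K) :
    homogeneousComponent d f ∈ mxR K n ^ d :=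
  mem_mxR_pow_iff.2 fun α hα ↦ by rw [coeff_homogeneousComponent, if_neg hα.ne]

lemma sub_homogeneousComponent_mem (hf : f ∈ mxR K n ^ d) :
    f - homogeneousComponent d f ∈ mxR K n ^ (d + 1) := by
  rw [mem_mxR_pow_iff] at hf ⊢
  intro α hα
  rw [map_sub, coeff_homogeneousComponent]
  split_ifs with h
  · exact sub_self _
  · rw [hf α (by lia), sub_zero]

lemma initialIdeal_le_iff :
    initialIdeal I ≤ J ↔ ∀ d, ∀ f ∈ I, f ∈ mxR K n ^ d → homogeneousComponent d f ∈ J := by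
  simp only [initialIdeal, Ideal.span_le, degM_eq_degree, mem_mxR_pow_iff]
  constructor
  · exact fun h d f hfI hf ↦ h ⟨f, hfI, d, hf, (coeff_homogeneousComponent d · f)⟩
  · rintro h g ⟨f, hfI, d, hf, hg⟩
    have hgf : g = homogeneousComponent d f := by
      ext α
      rw [hg, coeff_homogeneousComponent]
    exact hgf ▸ h d f hfI hf

lemma homogeneousComponent_mem_initialIdeal (hfI : f ∈ I) (hf : f ∈ mxR K n ^ d) :
    homogeneousComponent d f ∈ initialIdeal I :=
  initialIdeal_le_iff.1 le_rfl d f hfI hf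

lemma mxR_pow_le_initialIdeal (h : mxR K n ^ d ≤ I) : mxR K n ^ d ≤ initialIdeal I := by
  rw [mxR_eq_span, span_range_X_pow, Ideal.span_le, range_X_pow] at h ⊢
  rintro _ ⟨β, rfl, rfl⟩
  have hmem : monomial β (1 : K) ∈ mxR K n ^ β.degree :=
    mem_mxR_pow_iff.2 fun α hα ↦ coeff_monomial_ne (by rintro rfl; exact hα.false) 1
  have hinit : homogeneousComponent β.degree (monomial β (1 : K)) = monomial β 1 := by
    ext α
    rw [coeff_homogeneousComponent, coeff_monomial]
    split_ifs <;> simp_all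
  have hI : monomial β (1 : K) ∈ I := h ⟨β, rfl, rfl⟩
  have hcomp := homogeneousComponent_mem_initialIdeal hI hmem
  rwa [hinit] at hcomp

end InitialIdeal

section TrivialOnGraded

/-- A ring endomorphism `σ` acts trivially on the graded pieces `M ^ d / M ^ (d + 1)` of the
`M`-adic filtration: `σ f ≡ f` modulo `M ^ (d + 1)` for all `f ∈ M ^ d`. -/
def ActsTriviallyOnGraded {S : Type*} [CommRing S] (M : Ideal S) (σ : S →+* S) : Prop :=
  ∀ d, ∀ f ∈ M ^ d, σ f - f ∈ M ^ (d + 1)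

variable {S : Type*} [CommRing S] {M : Ideal S} {σ : S →+* S}

lemma map_mem_pow_of_sub_mem {d : ℕ} {f : S} (hf : f ∈ M ^ d) (hσf : σ f - f ∈ M ^ (d + 1)) :
    σ f ∈ M ^ d := by
  simpa using add_mem (Ideal.pow_le_pow_right d.le_succ hσf) hf

lemma map_mul_sub_mul_mem {a b : S} {i j : ℕ} (ha : a ∈ M ^ i) (hb : b ∈ M ^ j)
    (hσa : σ a - a ∈ M ^ (i + 1)) (hσb : σ b - b ∈ M ^ (j + 1)) :
    σ (a * b) - a * b ∈ M ^ (i + j + 1) := by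
  have hsplit : σ (a * b) - a * b = σ a * (σ b - b) + (σ a - a) * b := by
    rw [map_mul]
    ring
  rw [hsplit]
  refine add_mem ?_ ?_
  · simpa only [← pow_add, add_assoc] using Ideal.mul_mem_mul (map_mem_pow_of_sub_mem ha hσa) hσb
  · simpa only [← pow_add, add_right_comm] using Ideal.mul_mem_mul hσa hb

lemma actsTriviallyOnGraded_span {G : Set S} (h₀ : ∀ s, σ s - s ∈ Ideal.span G)
    (h₁ : ∀ g ∈ G, σ g - g ∈ Ideal.span G ^ 2) : ActsTriviallyOnGraded (Ideal.span G) σ := by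
  have hdeg₀ : ∀ s, s ∈ Ideal.span G ^ 0 ∧ σ s - s ∈ Ideal.span G ^ (0 + 1) := by simpa using h₀
  have hdeg₁ : ∀ f ∈ Ideal.span G, σ f - f ∈ Ideal.span G ^ (1 + 1) := by
    intro f hf
    induction hf using Submodule.span_induction with
    | mem g hg => exact h₁ g hg
    | zero => simp
    | add f g _ _ hf hg => simpa only [map_add, add_sub_add_comm] using add_mem hf hg
    | smul s f hf hσf =>
      simpa only [zero_add, smul_eq_mul] using
        map_mul_sub_mul_mem (hdeg₀ s).1 (by rwa [pow_one]) (hdeg₀ s).2 hσf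
  intro d
  induction d with
  | zero => exact fun s _ ↦ (hdeg₀ s).2
  | succ d ih =>
    intro f hf
    rw [pow_succ] at hf
    refine Submodule.mul_induction_on hf (fun a ha b hb ↦ ?_) fun f g hf hg ↦ ?_
    · exact map_mul_sub_mul_mem ha (by rwa [pow_one]) (ih a ha) (hdeg₁ b hb)
    · simpa only [map_add, add_sub_add_comm] using add_mem hf hg

lemma ActsTriviallyOnGraded.exists_sub_map_mem_pow (hσ : ActsTriviallyOnGraded M σ) (f : S)
    (d : ℕ) : ∃ g, f - σ g ∈ M ^ d := by
  induction d with
  | zero => exact ⟨0, by simp⟩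
  | succ d ih =>
    obtain ⟨g, hg⟩ := ih
    refine ⟨g + (f - σ g), ?_⟩
    simpa only [map_add, neg_sub, sub_sub] using neg_mem (hσ d _ hg)

end TrivialOnGraded

section PowerSeriesEndomorphism

open MvPowerSeries

variable {K : Type*} [Field K] {n : ℕ} {I : Ideal (MvPowerSeries (Fin n) K)}

lemma exists_algHom_X_add {Z : Fin n → MvPowerSeries (Fin n) K}
    (hZ : ∀ i, Z i ∈ mxR K n ^ 2) :
    ∃ σ : MvPowerSeries (Fin n) K →ₐ[K] MvPowerSeries (Fin n) K,
      (∀ i, σ (X i) = X i + Z i) ∧ ActsTriviallyOnGraded (mxR K n) σ.toRingHom := by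
  have hZ₀ : ∀ i, constantCoeff (Z i) = 0 := fun i ↦ Ideal.pow_le_self two_ne_zero (hZ i)
  have hsubst : HasSubst fun i ↦ X i + Z i :=
    hasSubst_of_constantCoeff_zero fun i ↦ by simp [hZ₀]
  refine ⟨substAlgHom hsubst, substAlgHom_X hsubst, ?_⟩
  have hmap : ∀ f ∈ mxR K n, substAlgHom hsubst f ∈ mxR K n := fun f hf ↦ by
    rw [coe_substAlgHom]
    exact constantCoeff_subst_eq_zero hsubst (fun i ↦ by simp [hZ₀]) hf
  have hconst : ∀ f, substAlgHom hsubst f - f ∈ mxR K n := fun f ↦ by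
    have hf : f - algebraMap K _ (constantCoeff f) ∈ mxR K n := by
      simp [mxR, MvPowerSeries.algebraMap_apply]
    have hσf := sub_mem (hmap _ hf) hf
    rwa [map_sub, AlgHom.commutes, sub_sub_sub_cancel_right] at hσf
  rw [mxR_eq_span] at hZ hconst ⊢
  refine actsTriviallyOnGraded_span hconst ?_
  rintro _ ⟨i, rfl⟩
  rw [AlgHom.toRingHom_eq_coe, RingHom.coe_coe, substAlgHom_X, add_sub_cancel_left]
  exact hZ i

lemma comap_le_initialIdeal {N : ℕ} (hN : mxR K n ^ N ≤ I)
    {σ : MvPowerSeries (Fin n) K →+* MvPowerSeries (Fin n) K}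
    (hσ : ActsTriviallyOnGraded (mxR K n) σ) (h : initialIdeal I ≤ I.comap σ) :
    I.comap σ ≤ initialIdeal I := by
  intro f hf
  -- the part of `f` of order less than `d` can be cleared, one initial form at a time
  have hclear : ∀ d, ∃ g ∈ mxR K n ^ d, f - g ∈ initialIdeal I ∧ σ g ∈ I := by
    intro d
    induction d with
    | zero => exact ⟨f, by simp, by simp, hf⟩
    | succ d ih =>
      obtain ⟨g, hgd, hfg, hσg⟩ := ih
      have hσgd : σ g ∈ mxR K n ^ d := map_mem_pow_of_sub_mem hgd (hσ d g hgd)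
      set p := homogeneousComponent d (σ g)
      have hp_mem : p ∈ initialIdeal I := homogeneousComponent_mem_initialIdeal hσg hσgd
      refine ⟨g - p, ?_, ?_, ?_⟩
      · simpa using sub_mem (sub_homogeneousComponent_mem hσgd) (hσ d g hgd)
      · simpa only [sub_add] using add_mem hfg hp_mem
      · rw [map_sub]
        exact sub_mem hσg (h hp_mem)
  obtain ⟨g, hgN, hfg, -⟩ := hclear N
  simpa using add_mem hfg (mxR_pow_le_initialIdeal hN hgN)

lemma nonempty_quotient_algEquiv_initialIdeal {N : ℕ} (hN : mxR K n ^ N ≤ I)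
    {σ : MvPowerSeries (Fin n) K →ₐ[K] MvPowerSeries (Fin n) K}
    (hσ : ActsTriviallyOnGraded (mxR K n) σ.toRingHom)
    (h : initialIdeal I ≤ I.comap σ.toRingHom) :
    Nonempty ((MvPowerSeries (Fin n) K ⧸ I) ≃ₐ[K]
      (MvPowerSeries (Fin n) K ⧸ initialIdeal I)) := by
  have hsurj : Function.Surjective ((Ideal.Quotient.mkₐ K I).comp σ) := by
    intro y
    obtain ⟨f, rfl⟩ := Ideal.Quotient.mk_surjective y
    obtain ⟨g, hg⟩ := hσ.exists_sub_map_mem_pow f N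
    exact ⟨g, ((Ideal.Quotient.mk_eq_mk_iff_sub_mem (I := I) f (σ g)).2 (hN hg)).symm⟩
  have hker : initialIdeal I = RingHom.ker ((Ideal.Quotient.mkₐ K I).comp σ) := by
    refine (h.antisymm (comap_le_initialIdeal hN hσ h)).trans ?_
    ext f
    exact (Ideal.Quotient.eq_zero_iff_mem (I := I)).symm
  exact ⟨((Ideal.quotientEquivAlgOfEq K hker).trans
    (Ideal.quotientKerAlgEquivOfSurjective hsurj)).symm⟩

end PowerSeriesEndomorphism

section Socle

variable {K A ι : Type*} [Field K] [CommRing A] [Algebra K A] {m : Ideal A} {φ : A →ₗ[K] K}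
  {x : ι → A}

/-- The socle `(0 :_A m)` of a ring `A` with respect to an ideal `m`. -/
def socle (m : Ideal A) : Ideal A := (⊥ : Ideal A).colon m

lemma mem_socle_of_forall_mul_eq_zero (hx : Ideal.span (Set.range x) = m) {a : A}
    (ha : ∀ i, x i * a = 0) : a ∈ socle m := by
  rw [socle, ← hx, Ideal.span, Submodule.colon_span, Submodule.mem_colon]
  rintro _ ⟨i, rfl⟩
  rw [smul_eq_mul, mul_comm, ha, Ideal.mem_bot]

lemma pow_le_socle {k : ℕ} (hm : m ^ (k + 1) = ⊥) : m ^ k ≤ socle m := by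
  intro a ha
  refine Submodule.mem_colon.2 fun b hb ↦ ?_
  rw [← hm, pow_succ]
  exact Ideal.mul_mem_mul ha hb

lemma map_mk_pow_eq_bot {I J : Ideal A} {k : ℕ} (h : J ^ k ≤ I) :
    J.map (Ideal.Quotient.mk I) ^ k = ⊥ := by
  rwa [← Ideal.map_pow, Ideal.map_eq_bot_iff_le_ker, Ideal.mk_ker]

lemma exists_linearMap_eq_zero_imp {V : Type*} [AddCommGroup V] [Module K V] {S : Submodule K V}
    (hS : Module.finrank K S = 1) : ∃ φ : V →ₗ[K] K, ∀ s ∈ S, φ s = 0 → s = 0 := by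
  have : Module.Finite K S := Module.finite_of_finrank_pos (by lia)
  have e : S ≃ₗ[K] K := LinearEquiv.ofFinrankEq S K (by rw [hS, Module.finrank_self])
  obtain ⟨φ, hφ⟩ := e.toLinearMap.exists_extend
  refine ⟨φ, fun s hs hφs ↦ ?_⟩
  have hes : e ⟨s, hs⟩ = 0 := by
    rw [← hφs, ← LinearEquiv.coe_coe, ← hφ]
    rfl
  simpa using hes

-- The functionals `φ (x i * ·)` on `m ^ k` have only socle elements as common zeros, so they are
-- linearly independent.
lemma exists_mem_pow_forall_apply_mul_eq [Fintype ι] {k : ℕ} (hx : Ideal.span (Set.range x) = m)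
    (hm : m ^ (k + 2) = ⊥) (hsoc : Module.finrank K (socle m) = 1)
    (hφ : ∀ s ∈ socle m, φ s = 0 → s = 0)
    (hcard : Fintype.card ι + 1 ≤ Module.finrank K ↥(m ^ k)) (c : ι → K) :
    ∃ z ∈ m ^ k, ∀ i, φ (x i * z) = c i := by
  have : Module.Finite K ↥(m ^ k) := Module.finite_of_finrank_pos (by lia)
  have : Module.Finite K (socle m) := Module.finite_of_finrank_pos (by lia)
  let T : ↥(m ^ k) →ₗ[K] (ι → K) := LinearMap.pi fun i ↦
    φ ∘ₗ LinearMap.mulLeft K (x i) ∘ₗ (m ^ k).subtype.restrictScalars K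
  have hker : ∀ z ∈ LinearMap.ker T, (z : A) ∈ socle m := by
    intro z hz
    refine mem_socle_of_forall_mul_eq_zero hx fun i ↦ ?_
    have hxz : x i * z ∈ m ^ (k + 1) := by
      rw [pow_succ']
      exact Ideal.mul_mem_mul (hx ▸ Ideal.subset_span ⟨i, rfl⟩) z.2
    exact hφ _ (pow_le_socle hm hxz) (congrFun hz i)
  have hker_le : Module.finrank K (LinearMap.ker T) ≤ 1 := by
    let incl : LinearMap.ker T →ₗ[K] socle m :=
      LinearMap.codRestrict ((socle m).restrictScalars K)
        (((m ^ k).subtype.restrictScalars K).domRestrict _) fun z ↦ hker z z.2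
    have hincl : Function.Injective incl := fun a b h ↦ by
      have hab : ((a : ↥(m ^ k)) : A) = b := congrArg (fun s : socle m ↦ (s : A)) h
      exact Subtype.ext (Subtype.ext hab)
    exact (LinearMap.finrank_le_finrank_of_injective hincl).trans_eq hsoc
  have hrange : LinearMap.range T = ⊤ := by
    refine Submodule.eq_top_of_finrank_eq (le_antisymm (Submodule.finrank_le _) ?_)
    have hrank := T.finrank_range_add_finrank_ker
    rw [Module.finrank_fintype_fun_eq_card]
    lia
  obtain ⟨z, hz⟩ := LinearMap.range_eq_top.1 hrange c
  exact ⟨z, z.2, congrFun hz⟩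

lemma exists_isotropic_translate [NeZero (2 : K)] [Fintype ι]
    (hx : Ideal.span (Set.range x) = m) (hm : m ^ 4 = ⊥)
    (hsoc : Module.finrank K (socle m) = 1) (hφ : ∀ s ∈ socle m, φ s = 0 → s = 0)
    (hcard : Fintype.card ι + 1 ≤ Module.finrank K ↥(m ^ 2)) :
    ∃ z : ι → A, (∀ i, z i ∈ m ^ 2) ∧ ∀ i j, φ ((x i + z i) * (x j + z j)) = 0 := by
  choose z hz hφz using fun i ↦ exists_mem_pow_forall_apply_mul_eq hx hm hsoc hφ hcard
    fun j ↦ -(φ (x i * x j) / 2)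
  refine ⟨z, hz, fun i j ↦ ?_⟩
  have hzz : z i * z j = 0 := by
    rw [← Ideal.mem_bot, ← hm, pow_add _ 2 2]
    exact Ideal.mul_mem_mul (hz i) (hz j)
  have hexpand : (x i + z i) * (x j + z j) = x i * x j + x i * z j + x j * z i + z i * z j := by
    ring
  rw [hexpand, hzz, add_zero, map_add, map_add, hφz, hφz, mul_comm (x j) (x i)]
  linear_combination -add_halves (φ (x i * x j))

end Socle

section QuotientDimension

variable {K S : Type*} [Field K] [CommRing S] [Algebra K S] {I J : Ideal S}

lemma finite_quotient_of_le [Module.Finite K (S ⧸ I)] (h : I ≤ J) : Module.Finite K (S ⧸ J) :=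
  .of_surjective (Ideal.Quotient.factorₐ K h).toLinearMap (Ideal.Quotient.factor_surjective h)

lemma finrank_quotient_le_of_le [Module.Finite K (S ⧸ I)] (h : I ≤ J) :
    Module.finrank K (S ⧸ J) ≤ Module.finrank K (S ⧸ I) :=
  LinearMap.finrank_le_finrank_of_surjective (f := (Ideal.Quotient.factorₐ K h).toLinearMap)
    (Ideal.Quotient.factor_surjective h)

lemma le_of_finrank_quotient_le [Module.Finite K (S ⧸ J)]
    (h : Module.finrank K (S ⧸ J) ≤ Module.finrank K (S ⧸ (I ⊔ J))) : I ≤ J := by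
  have hle : J ≤ I ⊔ J := le_sup_right
  have : Module.Finite K (S ⧸ (I ⊔ J)) := finite_quotient_of_le hle
  have hinj : Function.Injective (Ideal.Quotient.factorₐ K hle).toLinearMap :=
    (LinearMap.injective_iff_surjective_of_finrank_eq_finrank
      (h.antisymm (finrank_quotient_le_of_le hle))).2 (Ideal.Quotient.factor_surjective hle)
  intro f hf
  rw [← Ideal.Quotient.eq_zero_iff_mem]
  apply hinj
  rw [map_zero]
  exact Ideal.Quotient.eq_zero_iff_mem.2 (Ideal.mem_sup_left hf)

lemma finrank_quotient_sup_add_finrank_map [Module.Finite K (S ⧸ I)] :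
    Module.finrank K (S ⧸ (I ⊔ J)) + Module.finrank K (J.map (Ideal.Quotient.mk I)) =
      Module.finrank K (S ⧸ I) := by
  rw [← (DoubleQuot.quotQuotEquivQuotSupₐ K I J).toLinearEquiv.finrank_eq]
  exact Submodule.finrank_quotient_add_finrank
    ((J.map (Ideal.Quotient.mk I)).restrictScalars K)

end QuotientDimension

section HilbertFunction

open MvPowerSeries

variable {K : Type*} [Field K] {n : ℕ} {I : Ideal (MvPowerSeries (Fin n) K)}

lemma ncard_degree_lt_two_le (n : ℕ) : {α : Fin n →₀ ℕ | α.degree < 2}.ncard ≤ n + 1 := by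
  have hset : {α : Fin n →₀ ℕ | α.degree < 2} =
      insert 0 (Set.range fun i ↦ Finsupp.single i 1) := by
    ext α
    rw [Finsupp.range_single_one]
    simp only [Set.mem_ofPred_eq, Set.mem_insert_iff, ← Finsupp.degree_eq_zero_iff]
    lia
  rw [hset]
  refine (Set.ncard_insert_le _ _).trans (Nat.succ_le_succ ?_)
  rw [← Set.image_univ]
  exact (Set.ncard_image_le Set.finite_univ).trans_eq (by simp [Set.ncard_univ])

lemma exists_injective_jet (d : ℕ) :
    ∃ j : (MvPowerSeries (Fin n) K ⧸ mxR K n ^ d) →ₗ[K]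
      ({α : Fin n →₀ ℕ | α.degree < d} → K), Function.Injective j := by
  let jet : MvPowerSeries (Fin n) K →ₗ[K] ({α : Fin n →₀ ℕ | α.degree < d} → K) :=
    LinearMap.pi fun α ↦ coeff α.1
  have hker : LinearMap.ker jet = (mxR K n ^ d).restrictScalars K := by
    ext f
    simp [jet, funext_iff, mem_mxR_pow_iff]
  refine ⟨Submodule.liftQ _ jet hker.ge ∘ₗ
    (Submodule.Quotient.restrictScalarsEquiv K (mxR K n ^ d)).symm, ?_⟩
  rw [LinearMap.coe_comp]
  exact (LinearMap.ker_eq_bot.1 (Submodule.ker_liftQ_eq_bot _ _ _ hker.le)).comp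
    (LinearEquiv.injective _)

instance finite_quotient_mxR_pow (d : ℕ) :
    Module.Finite K (MvPowerSeries (Fin n) K ⧸ mxR K n ^ d) := by
  have := (Finsupp.finite_of_degree_lt (σ := Fin n) d).to_subtype
  obtain ⟨j, hj⟩ := exists_injective_jet (K := K) (n := n) d
  exact .of_injective j hj

lemma finrank_quotient_mxR_sq_le :
    Module.finrank K (MvPowerSeries (Fin n) K ⧸ mxR K n ^ 2) ≤ n + 1 := by
  have := (Finsupp.finite_of_degree_lt (σ := Fin n) 2).fintype
  obtain ⟨j, hj⟩ := exists_injective_jet (K := K) (n := n) 2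
  calc _ ≤ Module.finrank K ({α : Fin n →₀ ℕ | α.degree < 2} → K) :=
        LinearMap.finrank_le_finrank_of_injective hj
    _ = {α : Fin n →₀ ℕ | α.degree < 2}.ncard := by
        rw [Module.finrank_fintype_fun_eq_card, ← Nat.card_eq_fintype_card, Nat.card_coe_set_eq]
    _ ≤ n + 1 := ncard_degree_lt_two_le n

lemma finrank_quotient_sup_mxR_pow (I : Ideal (MvPowerSeries (Fin n) K)) (k : ℕ) :
    Module.finrank K (MvPowerSeries (Fin n) K ⧸ (I ⊔ mxR K n ^ k)) =
      ∑ i ∈ Finset.range k, hilbQ I i := by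
  have hmono : Monotone fun i ↦
      Module.finrank K (MvPowerSeries (Fin n) K ⧸ (I ⊔ mxR K n ^ i)) := by
    intro i j hij
    have : Module.Finite K (MvPowerSeries (Fin n) K ⧸ (I ⊔ mxR K n ^ j)) :=
      finite_quotient_of_le le_sup_right
    exact finrank_quotient_le_of_le (sup_le_sup_left (Ideal.pow_le_pow_right hij) I)
  have hzero : Module.finrank K (MvPowerSeries (Fin n) K ⧸ (I ⊔ mxR K n ^ 0)) = 0 := by
    rw [pow_zero, Ideal.one_eq_top, sup_top_eq]
    exact Module.finrank_zero_of_subsingleton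
  simp only [hilbQ, Finset.sum_range_tsub hmono, hzero, tsub_zero]

end HilbertFunction

section CanonicallyGraded

open MvPowerSeries

open scoped Pointwise

variable {K : Type*} [Field K] {n : ℕ} {I : Ideal (MvPowerSeries (Fin n) K)}

lemma le_mxR_sq_of_hilbQ (h0 : hilbQ I 0 = 1) (h1 : hilbQ I 1 = n) : I ≤ mxR K n ^ 2 := by
  refine le_of_finrank_quotient_le (K := K) (finrank_quotient_mxR_sq_le.trans_eq ?_)
  rw [finrank_quotient_sup_mxR_pow, Finset.sum_range_succ, Finset.sum_range_one, h0, h1, add_comm]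

lemma finrank_map_mk_sq_of_hilbQ (h2 : hilbQ I 2 = n) (h3 : hilbQ I 3 = 1) (hm4 : mxR K n ^ 4 ≤ I) :
    Module.finrank K ↥((mxR K n).map (Ideal.Quotient.mk I) ^ 2) = n + 1 := by
  have : Module.Finite K (MvPowerSeries (Fin n) K ⧸ I) := finite_quotient_of_le hm4
  have hsum := finrank_quotient_sup_add_finrank_map (K := K) (I := I) (J := mxR K n ^ 2)
  have hI := finrank_quotient_sup_mxR_pow I 4
  rw [sup_eq_left.2 hm4] at hI
  rw [finrank_quotient_sup_mxR_pow, hI, Finset.sum_range_succ _ 3, Finset.sum_range_succ _ 2,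
    h2, h3, add_assoc, Ideal.map_pow] at hsum
  exact Nat.add_left_cancel hsum

lemma initialIdeal_le_comap_of_forall_apply_eq_zero
    {σ : MvPowerSeries (Fin n) K →ₐ[K] MvPowerSeries (Fin n) K}
    (hσ : ActsTriviallyOnGraded (mxR K n) σ.toRingHom)
    (hI : I ≤ mxR K n ^ 2) (hm4 : mxR K n ^ 4 ≤ I) {φ : (MvPowerSeries (Fin n) K ⧸ I) →ₗ[K] K}
    (hφ : ∀ s ∈ socle ((mxR K n).map (Ideal.Quotient.mk I)), φ s = 0 → s = 0)
    (hφσ : ∀ i j, φ (Ideal.Quotient.mk I (σ (X i * X j))) = 0) :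
    initialIdeal I ≤ I.comap σ.toRingHom := by
  refine initialIdeal_le_iff.2 fun d f hfI hf ↦ Ideal.mem_comap.2 ?_
  set g := homogeneousComponent d f with hg
  have hsub : σ g - f ∈ mxR K n ^ (d + 1) := by
    simpa [← hg] using sub_mem (hσ d g (homogeneousComponent_mem_mxR_pow f))
      (sub_homogeneousComponent_mem hf)
  suffices h : σ g - f ∈ I by simpa using add_mem h hfI
  rcases lt_trichotomy d 2 with hd | rfl | hd
  · have hg_zero : g = 0 := by
      ext α
      rw [hg, coeff_homogeneousComponent, map_zero]
      split_ifs with hα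
      · exact mem_mxR_pow_iff.1 (hI hfI) α (hα ▸ hd)
      · rfl
    simpa [hg_zero] using hfI
  · have hφg : φ (Ideal.Quotient.mk I (σ g)) = 0 := by
      refine linearMap_homogeneousComponent_eq_zero
        (ψ := φ ∘ₗ ((Ideal.Quotient.mkₐ K I).comp σ).toLinearMap) (fun p hp ↦ ?_) f
      rw [pow_two] at hp
      obtain ⟨_, ⟨i, rfl⟩, _, ⟨j, rfl⟩, rfl⟩ := hp
      exact hφσ i j
    have hsoc : Ideal.Quotient.mk I (σ g - f) ∈ socle ((mxR K n).map (Ideal.Quotient.mk I)) := by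
      refine pow_le_socle (map_mk_pow_eq_bot hm4) ?_
      rw [← Ideal.map_pow]
      exact Ideal.mem_map_of_mem _ hsub
    refine Ideal.Quotient.eq_zero_iff_mem.1 (hφ _ hsoc ?_)
    rw [map_sub, map_sub, hφg, Ideal.Quotient.eq_zero_iff_mem.2 hfI, map_zero, sub_zero]
  · exact hm4 (Ideal.pow_le_pow_right (by lia) hsub)

theorem canonically_graded_of_hilbert_1nn1_general
    {K : Type*} [Field K] [NeZero (2 : K)] {n : ℕ} (I : Ideal (MvPowerSeries (Fin n) K))
    (h0 : hilbQ I 0 = 1) (h1 : hilbQ I 1 = n) (h2 : hilbQ I 2 = n) (h3 : hilbQ I 3 = 1)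
    (hm4 : mxR K n ^ 4 ≤ I) (hGor : socDimQ I = 1) :
    Nonempty ((MvPowerSeries (Fin n) K ⧸ I) ≃ₐ[K]
      (MvPowerSeries (Fin n) K ⧸ initialIdeal I)) := by
  set m := (mxR K n).map (Ideal.Quotient.mk I) with hm
  have hspan : Ideal.span (Set.range fun i ↦ Ideal.Quotient.mk I (X i)) = m := by
    rw [hm, mxR_eq_span, Ideal.map_span, ← Set.range_comp]
    rfl
  obtain ⟨φ, hφ⟩ := exists_linearMap_eq_zero_imp hGor
  obtain ⟨z, hz, hφz⟩ := exists_isotropic_translate hspan (map_mk_pow_eq_bot hm4) hGor hφ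
    (by rw [Fintype.card_fin, finrank_map_mk_sq_of_hilbQ h2 h3 hm4])
  have hlift : ∀ i, ∃ Z ∈ mxR K n ^ 2, Ideal.Quotient.mk I Z = z i := fun i ↦
    (Ideal.mem_map_iff_of_surjective _ Ideal.Quotient.mk_surjective).1
      (by rw [Ideal.map_pow]; exact hz i)
  choose Z hZ hZz using hlift
  obtain ⟨σ, hσX, hσ⟩ := exists_algHom_X_add hZ
  refine nonempty_quotient_algEquiv_initialIdeal hm4 hσ
    (initialIdeal_le_comap_of_forall_apply_eq_zero hσ (le_mxR_sq_of_hilbQ h0 h1) hm4 hφ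
      fun i j ↦ ?_)
  simpa only [map_mul, hσX, map_add, hZz] using hφz i j

end CanonicallyGraded

/-- **Theorem (Elias–Rossi).** Every Artinian Gorenstein local `K`-algebra
`A = R/I` (with `K` algebraically closed of characteristic zero) with Hilbert
function `{1, n, n, 1}` is canonically graded: `A` is isomorphic as a
`K`-algebra to its associated graded ring `gr_m(A) = ⊕_{i≥0} m^i/m^(i+1) = R/I^*`. -/
theorem canonically_graded_of_hilbert_1nn1
    {K : Type*} [Field K] [IsAlgClosed K] [CharZero K] {n : ℕ}
    (I : Ideal (MvPowerSeries (Fin n) K))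
    (h0 : hilbQ I 0 = 1) (h1 : hilbQ I 1 = n) (h2 : hilbQ I 2 = n) (h3 : hilbQ I 3 = 1)
    (hm4 : mxR K n ^ 4 ≤ I)
    (hGor : socDimQ I = 1) :
    Nonempty ((MvPowerSeries (Fin n) K ⧸ I) ≃ₐ[K]
      (MvPowerSeries (Fin n) K ⧸ initialIdeal I)) :=
  canonically_graded_of_hilbert_1nn1_general I h0 h1 h2 h3 hm4 hGor
end

section
/- Let F_3 ∈ K[y_1,…,y_n] be a non-degenerate homogeneous form of degree three and let F_2 ∈ K[y_1,…,y_n] be any homogeneous form of degree two. Then the Artinian Gorenstein local K-algebras A_{F_3 + F_2} and A_{F_3} are isomorphic as K-algebras. -/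
/-- The contraction (derivative) action of the power series ring
`R = K[[x_1,…,x_n]]` on the polynomial ring `P = K[y_1,…,y_n]`:
`f ∘ g = f(∂/∂y_1, …, ∂/∂y_n)(g)`.  It is defined on the monomial basis by
`x^α ∘ y^β = (∏ i, (β i)!/(β i - α i)!) y^(β-α)` (zero unless `α ≤ β`), the honest
iterated partial derivative, and extended `K`-linearly. -/
noncomputable def contract {K : Type*} [Field K] {n : ℕ} (f : MvPowerSeries (Fin n) K) :
    MvPolynomial (Fin n) K →ₗ[K] MvPolynomial (Fin n) K :=
  (MvPolynomial.basisMonomials (Fin n) K).constr K fun β =>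
    ∑ α ∈ Finset.Iic β,
      (MvPowerSeries.coeff α f * ∏ i, ((β i).descFactorial (α i) : K)) •
        MvPolynomial.monomial (β - α) (1 : K)

theorem contract_add {K : Type*} [Field K] {n : ℕ} (f g : MvPowerSeries (Fin n) K) :
    contract (f + g) = contract f + contract g := by
  unfold contract
  rw [← map_add]
  congr 1
  funext β
  simp only [Pi.add_apply]
  rw [← Finset.sum_add_distrib]
  exact Finset.sum_congr rfl fun α _ => by rw [map_add, add_mul, add_smul]

theorem contract_zero {K : Type*} [Field K] {n : ℕ} :
    contract (0 : MvPowerSeries (Fin n) K) = 0 := by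
  unfold contract
  convert map_zero ((MvPolynomial.basisMonomials (Fin n) K).constr
    (M' := MvPolynomial (Fin n) K) K) using 2
  funext β
  simp

/-- The annihilator `Ann_R(F) = Ann_R(⟨F⟩_R)` of (the cyclic `R`-submodule of
`P` generated by) a polynomial `F` under the contraction action; an ideal of
`R = K[[x_1,…,x_n]]`.  The Artinian Gorenstein local algebra associated to `F`
is `A_F = R ⧸ annR F`. -/
noncomputable def annR {K : Type*} [Field K] {n : ℕ} (F : MvPolynomial (Fin n) K) :
    Ideal (MvPowerSeries (Fin n) K) where
  carrier := {f | ∀ u : MvPowerSeries (Fin n) K, contract (u * f) F = 0}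
  zero_mem' := fun u => by rw [mul_zero, contract_zero]; rfl
  add_mem' := fun {a b} ha hb u => by
    rw [mul_add, contract_add, LinearMap.add_apply, ha u, hb u, add_zero]
  smul_mem' := fun c f hf u => by
    rw [smul_eq_mul, ← mul_assoc]; exact hf (u * c)

/-- The linear form `l 1 • x_1 + ⋯ + l n • x_n` in `R = K[[x_1,…,x_n]]`. -/
noncomputable def linForm {K : Type*} [Field K] {n : ℕ} (l : Fin n → K) :
    MvPowerSeries (Fin n) K :=
  ∑ i, MvPowerSeries.monomial (Finsupp.single i 1) (l i)

/-- A polynomial `F ∈ K[y_1,…,y_n]` is non-degenerate if `Ann_R(F)` contains no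
nonzero linear form; equivalently, the embedding dimension of `A_F` is `n`,
i.e. `HF_{A_F}(1) = n`. -/
def nondegenerate {K : Type*} [Field K] {n : ℕ} (F : MvPolynomial (Fin n) K) : Prop :=
  ∀ l : Fin n → K, linForm l ∈ annR F → l = 0

/-!
By Macaulay duality `Ann_R(F)` is the largest ideal in the kernel of the functional
`λ_F : g ↦ (g ∘ F)(0)`. It contains a power of the maximal ideal `𝔪`, so `A_F` is already a quotient
of `K[x_1,…,x_n]`, and a substitution `φ : x_i ↦ x_i + q_i` with `q_i ∈ 𝔪²` remains onto `A_F`.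
Hence `λ_F = λ_G ∘ φ` implies `A_F ≃ A_G`.

Take the `q_i` to be quadratic forms. As `λ_{F_3}` only sees degree three, on `K[x_1,…,x_n]` the
identity `λ_{F_3 + F_2} = λ_{F_3} ∘ φ` says
`λ_{F_3}(x_i q_j) + λ_{F_3}(x_j q_i) = λ_{F_2}(x_i x_j)` for all `i, j`.
Non-degeneracy of `F_3` makes `ℓ ↦ λ_{F_3}(ℓ ·)` injective from linear forms to the dual of
quadratic forms. By duality every functional on linear forms is `λ_{F_3}(· q)` for a quadratic
form `q`, so one can solve `λ_{F_3}(x_i q_j) = λ_{F_2}(x_i x_j) / 2`.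
-/

namespace Apolarity

open MvPolynomial

section TangentToIdentity

variable {A Φ : Type*} [CommRing A] [FunLike Φ A A] [RingHomClass Φ A A] {I : Ideal A} {φ : Φ}

theorem map_sub_mem_pow_succ (h₀ : ∀ a, φ a - a ∈ I) (h₁ : ∀ a ∈ I, φ a - a ∈ I ^ 2)
    (k : ℕ) {a : A} (ha : a ∈ I ^ k) : φ a - a ∈ I ^ (k + 1) := by
  induction k generalizing a with
  | zero => simpa using h₀ a
  | succ k ih =>
    rw [pow_succ] at ha
    induction ha using Submodule.mul_induction_on' with
    | mem_mul_mem a ha b hb =>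
      have hφb : φ b ∈ I := by simpa using I.add_mem (h₀ b) hb
      have split : φ (a * b) - a * b = (φ a - a) * φ b + a * (φ b - b) := by
        rw [map_mul]; ring
      have hb₂ : a * (φ b - b) ∈ I ^ (k + 1 + 1) := pow_add I k 2 ▸ Ideal.mul_mem_mul ha (h₁ b hb)
      rw [split]
      exact add_mem (pow_succ I (k + 1) ▸ Ideal.mul_mem_mul (ih ha) hφb) hb₂
    | add a _ b _ iha ihb =>
      rw [map_add, add_sub_add_comm]
      exact add_mem iha ihb

theorem exists_map_sub_mem_pow (h₀ : ∀ a, φ a - a ∈ I) (h₁ : ∀ a ∈ I, φ a - a ∈ I ^ 2)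
    (a : A) (k : ℕ) : ∃ b, φ b - a ∈ I ^ k := by
  induction k with
  | zero => exact ⟨0, by simp⟩
  | succ k ih =>
    obtain ⟨b, hb⟩ := ih
    have correction := map_sub_mem_pow_succ h₀ h₁ k hb
    refine ⟨b - (φ b - a), ?_⟩
    rw [map_sub, show φ b - φ (φ b - a) - a = -(φ (φ b - a) - (φ b - a)) by ring]
    exact neg_mem correction

end TangentToIdentity

section IdealOfVars

variable {σ R : Type*} [CommSemiring R]

theorem mem_idealOfVars_pow_of_isHomogeneous {p : MvPolynomial σ R} {d : ℕ}
    (hp : p.IsHomogeneous d) : p ∈ idealOfVars σ R ^ d :=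
  (mem_pow_idealOfVars_iff' d p).mpr fun _ hβ => hp.coeff_eq_zero hβ.ne

theorem linearMap_ext_of_idealOfVars_cube {M : Type*} [AddCommMonoid M] [Module R M]
    {L L' : MvPolynomial σ R →ₗ[R] M} (h₀ : L 1 = L' 1) (h₁ : ∀ i, L (X i) = L' (X i))
    (h₂ : ∀ i j, L (X i * X j) = L' (X i * X j))
    (h₃ : ∀ p ∈ idealOfVars σ R ^ 3, L p = L' p) : L = L' := by
  have split (β : σ →₀ ℕ) :
      β = 0 ∨ ∃ i γ, monomial β (1 : R) = X i * monomial γ 1 := by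
    refine or_iff_not_imp_left.mpr fun hβ => ?_
    obtain ⟨i, hi⟩ := Finsupp.ne_iff.mp hβ
    have hle : Finsupp.single i 1 ≤ β := by
      simpa [Nat.one_le_iff_ne_zero] using hi
    exact ⟨i, β - Finsupp.single i 1, by
      rw [X, monomial_mul, add_tsub_cancel_of_le hle, one_mul]⟩
  have hX (i : σ) : (X i : MvPolynomial σ R) ∈ idealOfVars σ R := Ideal.subset_span ⟨i, rfl⟩
  refine (basisMonomials σ R).ext fun β => ?_
  simp only [coe_basisMonomials]
  obtain rfl | ⟨i, γ, hβ⟩ := split β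
  · exact h₀
  rw [hβ]
  obtain rfl | ⟨j, δ, hγ⟩ := split γ
  · simpa using h₁ i
  rw [hγ]
  obtain rfl | ⟨k, ε, hδ⟩ := split δ
  · simpa using h₂ i j
  rw [hδ]
  refine h₃ _ ?_
  rw [← mul_assoc, ← mul_assoc, pow_three']
  exact Ideal.mul_mem_right _ _ (Ideal.mul_mem_mul (Ideal.mul_mem_mul (hX i) (hX j)) (hX k))

end IdealOfVars

section PolynomialEndomorphism

variable {σ R : Type*} [CommRing R] {φ : MvPolynomial σ R →ₐ[R] MvPolynomial σ R}

theorem map_X_sub_mem_idealOfVars_sq {q : σ → MvPolynomial σ R} (hq : ∀ i, (q i).IsHomogeneous 2)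
    (hφ : ∀ i, φ (X i) = X i + q i) (i : σ) : φ (X i) - X i ∈ idealOfVars σ R ^ 2 := by
  rw [hφ, add_sub_cancel_left]
  exact mem_idealOfVars_pow_of_isHomogeneous (hq i)

theorem map_sub_mem_idealOfVars (hφ : ∀ i, φ (X i) - X i ∈ idealOfVars σ R ^ 2)
    (p : MvPolynomial σ R) : φ p - p ∈ idealOfVars σ R := by
  induction p using MvPolynomial.induction_on with
  | C a => simp [← algebraMap_eq]
  | add p q hp hq =>
    rw [map_add, add_sub_add_comm]
    exact add_mem hp hq
  | mul_X p i hp =>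
    rw [map_mul, show φ p * φ (X i) - p * X i = (φ p - p) * φ (X i) + p * (φ (X i) - X i) by ring]
    exact add_mem (Ideal.mul_mem_right _ _ hp)
      (Ideal.mul_mem_left _ _ (Ideal.pow_le_self two_ne_zero (hφ i)))

theorem map_sub_mem_idealOfVars_sq (hφ : ∀ i, φ (X i) - X i ∈ idealOfVars σ R ^ 2)
    {p : MvPolynomial σ R} (hp : p ∈ idealOfVars σ R) : φ p - p ∈ idealOfVars σ R ^ 2 := by
  induction hp using Submodule.span_induction with
  | mem _ hx => obtain ⟨i, rfl⟩ := hx; exact hφ i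
  | zero => simp
  | add p q _ _ hp hq =>
    rw [map_add, add_sub_add_comm]
    exact add_mem hp hq
  | smul c p hpm hp =>
    have hφp : φ p ∈ idealOfVars σ R := by
      simpa using add_mem (map_sub_mem_idealOfVars hφ p) hpm
    rw [smul_eq_mul, map_mul, show φ c * φ p - c * p = (φ c - c) * φ p + c * (φ p - p) by ring]
    exact add_mem (pow_two (idealOfVars σ R) ▸
      Ideal.mul_mem_mul (map_sub_mem_idealOfVars hφ c) hφp) (Ideal.mul_mem_left _ _ hp)

end PolynomialEndomorphism

variable {K : Type*} [Field K] {n : ℕ}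

theorem contract_smul (c : K) (g : MvPowerSeries (Fin n) K) :
    contract (c • g) = c • contract g := by
  refine (basisMonomials (Fin n) K).ext fun β => ?_
  simp only [contract, LinearMap.smul_apply, Module.Basis.constr_basis, map_smul, smul_eq_mul,
    Finset.smul_sum, smul_smul, mul_assoc]

theorem coeff_contract_monomial (g : MvPowerSeries (Fin n) K) (β γ : Fin n →₀ ℕ) :
    coeff γ (contract g (monomial β 1)) =
      if γ ≤ β then
        MvPowerSeries.coeff (β - γ) g * ∏ i, ((β i).descFactorial ((β - γ) i) : K)
      else 0 := by
  have basis_apply : contract g (monomial β 1) = _ :=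
    (basisMonomials (Fin n) K).constr_basis K _ β
  simp only [basis_apply, coeff_sum, coeff_smul, coeff_monomial, smul_eq_mul]
  split_ifs with h
  · rw [Finset.sum_eq_single_of_mem (β - γ) (Finset.mem_Iic.mpr tsub_le_self),
      if_pos (tsub_tsub_cancel_of_le h), mul_one]
    intro α hα hne
    rw [if_neg, mul_zero]
    rintro rfl
    exact hne (tsub_tsub_cancel_of_le (Finset.mem_Iic.mp hα)).symm
  · refine Finset.sum_eq_zero fun α _ => ?_
    rw [if_neg, mul_zero]
    rintro rfl
    exact h tsub_le_self

/-- The apolarity pairing `⟨F, g⟩ = (g ∘ F)(0)` between polynomials and power series. -/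
noncomputable def apolarPairing :
    MvPolynomial (Fin n) K →ₗ[K] MvPowerSeries (Fin n) K →ₗ[K] K :=
  LinearMap.mk₂ K (fun F g => coeff 0 (contract g F))
    (fun F G g => by rw [map_add, coeff_add])
    (fun c F g => by rw [map_smul, coeff_smul])
    (fun F g h => by rw [contract_add, LinearMap.add_apply, coeff_add])
    (fun c F g => by rw [contract_smul, LinearMap.smul_apply, coeff_smul])

theorem apolarPairing_apply (F : MvPolynomial (Fin n) K) (g : MvPowerSeries (Fin n) K) :
    apolarPairing F g = coeff 0 (contract g F) := rfl

theorem apolarPairing_monomial (β : Fin n →₀ ℕ) (g : MvPowerSeries (Fin n) K) :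
    apolarPairing (monomial β 1) g = MvPowerSeries.coeff β g * ∏ i, ((β i).factorial : K) := by
  simp [apolarPairing_apply, coeff_contract_monomial, Nat.descFactorial_self]

theorem apolarPairing_eq_zero_of_coeff {F : MvPolynomial (Fin n) K}
    {g : MvPowerSeries (Fin n) K} (h : ∀ β ∈ F.support, MvPowerSeries.coeff β g = 0) :
    apolarPairing F g = 0 := by
  rw [F.as_sum, map_sum, LinearMap.sum_apply]
  refine Finset.sum_eq_zero fun β hβ => ?_
  rw [← mul_one (coeff β F), ← smul_eq_mul, ← smul_monomial, map_smul, LinearMap.smul_apply,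
    apolarPairing_monomial, h β hβ, zero_mul, smul_zero]

theorem factorial_mul_coeff_contract (γ : Fin n →₀ ℕ) (g : MvPowerSeries (Fin n) K)
    (F : MvPolynomial (Fin n) K) :
    (∏ i, ((γ i).factorial : K)) * coeff γ (contract g F) =
      apolarPairing F (MvPowerSeries.monomial γ 1 * g) := by
  suffices h : (∏ i, ((γ i).factorial : K)) • lcoeff K γ ∘ₗ contract g =
      apolarPairing.flip (MvPowerSeries.monomial γ 1 * g) from LinearMap.congr_fun h F
  refine (basisMonomials (Fin n) K).ext fun β => ?_
  simp only [coe_basisMonomials, LinearMap.smul_apply, LinearMap.comp_apply, lcoeff_apply,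
    LinearMap.flip_apply, smul_eq_mul, coeff_contract_monomial, apolarPairing_monomial,
    MvPowerSeries.coeff_monomial_mul]
  split_ifs with h
  · have factorials : (∏ i, ((γ i).factorial : K)) * ∏ i, ((β i).descFactorial ((β - γ) i) : K) =
        ∏ i, ((β i).factorial : K) := by
      rw [← Finset.prod_mul_distrib]
      refine Finset.prod_congr rfl fun i _ => ?_
      have factorial_split := Nat.factorial_mul_descFactorial (Nat.sub_le (β i) (γ i))
      rw [Nat.sub_sub_self (h i)] at factorial_split
      rw [← factorial_split, Nat.cast_mul, Finsupp.tsub_apply]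
    rw [← factorials]
    ring
  · simp

/-- The functional `p ↦ (p ∘ F)(0)` on the polynomial subring `K[x_1,…,x_n]` of `R`, the dual
generator of `A_F`. -/
noncomputable def apolarFunctional (F : MvPolynomial (Fin n) K) : MvPolynomial (Fin n) K →ₗ[K] K :=
  apolarPairing F ∘ₗ (coeToMvPowerSeries.algHom K).toLinearMap

theorem coe_algHom_apply (p : MvPolynomial (Fin n) K) :
    coeToMvPowerSeries.algHom K p = (p : MvPowerSeries (Fin n) K) := by
  simp [Algebra.algebraMap_self, MvPowerSeries.map_id]

theorem apolarFunctional_apply (F p : MvPolynomial (Fin n) K) :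
    apolarFunctional F p = apolarPairing F (p : MvPowerSeries (Fin n) K) :=
  congrArg (apolarPairing F) (coe_algHom_apply p)

theorem apolarFunctional_add (F G : MvPolynomial (Fin n) K) :
    apolarFunctional (F + G) = apolarFunctional F + apolarFunctional G := by
  rw [apolarFunctional, map_add]; rfl

theorem apolarFunctional_eq_zero_of_isHomogeneous {F p : MvPolynomial (Fin n) K} {d e : ℕ}
    (hF : F.IsHomogeneous d) (hp : p.IsHomogeneous e) (hde : d ≠ e) :
    apolarFunctional F p = 0 := by
  rw [apolarFunctional_apply]
  refine apolarPairing_eq_zero_of_coeff fun β hβ => ?_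
  rw [coeff_coe]
  have hβd : β.degree = d := not_imp_comm.mp hF.coeff_eq_zero (mem_support_iff.mp hβ)
  exact hp.coeff_eq_zero (hβd.trans_ne hde)

theorem apolarFunctional_eq_zero_of_mem_pow {F p : MvPolynomial (Fin n) K} {k : ℕ}
    (hF : F.totalDegree < k) (hp : p ∈ idealOfVars (Fin n) K ^ k) : apolarFunctional F p = 0 := by
  rw [apolarFunctional_apply]
  refine apolarPairing_eq_zero_of_coeff fun β hβ => ?_
  rw [coeff_coe]
  exact (mem_pow_idealOfVars_iff' k p).mp hp β ((le_totalDegree hβ).trans_lt hF)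

theorem apolarFunctional_add_eq_comp {F₃ F₂ : MvPolynomial (Fin n) K}
    (hF₃ : F₃.IsHomogeneous 3) (hF₂ : F₂.IsHomogeneous 2) {q : Fin n → MvPolynomial (Fin n) K}
    (hq : ∀ j, (q j).IsHomogeneous 2)
    (hqF : ∀ i j, apolarFunctional F₃ (X i * q j) + apolarFunctional F₃ (X j * q i) =
      apolarFunctional F₂ (X i * X j))
    {φ : MvPolynomial (Fin n) K →ₐ[K] MvPolynomial (Fin n) K} (hφ : ∀ i, φ (X i) = X i + q i) :
    apolarFunctional (F₃ + F₂) = apolarFunctional F₃ ∘ₗ φ.toLinearMap := by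
  have hX (i : Fin n) : (X i : MvPolynomial (Fin n) K).IsHomogeneous 1 := isHomogeneous_X K i
  have F₃_vanish {p : MvPolynomial (Fin n) K} {e : ℕ} (hp : p.IsHomogeneous e) (he : 3 ≠ e) :
      apolarFunctional F₃ p = 0 := apolarFunctional_eq_zero_of_isHomogeneous hF₃ hp he
  have F₂_vanish {p : MvPolynomial (Fin n) K} {e : ℕ} (hp : p.IsHomogeneous e) (he : 2 ≠ e) :
      apolarFunctional F₂ p = 0 := apolarFunctional_eq_zero_of_isHomogeneous hF₂ hp he
  rw [apolarFunctional_add]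
  apply linearMap_ext_of_idealOfVars_cube <;>
    simp only [LinearMap.add_apply, LinearMap.comp_apply, AlgHom.toLinearMap_apply]
  · rw [map_one φ, F₂_vanish (isHomogeneous_one _ _) (by decide), add_zero]
  · intro i
    rw [hφ, map_add, F₂_vanish (hX i) (by decide), F₃_vanish (hq i) (by decide)]
  · intro i j
    have expand : φ (X i * X j) = X i * X j + X i * q j + X j * q i + q i * q j := by
      rw [map_mul, hφ, hφ]; ring
    rw [expand, map_add, map_add, map_add, F₃_vanish ((hq i).mul (hq j)) (by decide), ← hqF]
    ring
  · intro p hp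
    have tangent := map_X_sub_mem_idealOfVars_sq hq hφ
    have quartic : φ p - p ∈ idealOfVars (Fin n) K ^ 4 :=
      map_sub_mem_pow_succ (map_sub_mem_idealOfVars tangent)
        (fun _ => map_sub_mem_idealOfVars_sq tangent) 3 hp
    have hφp := apolarFunctional_eq_zero_of_mem_pow
      (hF₃.totalDegree_le.trans_lt (by decide)) quartic
    rw [map_sub, sub_eq_zero] at hφp
    rw [hφp, apolarFunctional_eq_zero_of_mem_pow (hF₂.totalDegree_le.trans_lt (by decide)) hp,
      add_zero]

theorem linForm_eq_coe (l : Fin n → K) :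
    linForm l = (Fintype.linearCombination K X l : MvPolynomial (Fin n) K) := by
  rw [Fintype.linearCombination_apply, ← coe_algHom_apply, map_sum]
  refine Finset.sum_congr rfl fun i _ => ?_
  rw [coe_algHom_apply, X, smul_monomial, coe_monomial, smul_eq_mul, mul_one]

/-- The canonical map `K[x_1,…,x_n] → A_F`. -/
noncomputable def toApolarAlgebra (F : MvPolynomial (Fin n) K) :
    MvPolynomial (Fin n) K →ₐ[K] MvPowerSeries (Fin n) K ⧸ annR F :=
  (Ideal.Quotient.mkₐ K (annR F)).comp (coeToMvPowerSeries.algHom K)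

theorem toApolarAlgebra_apply (F p : MvPolynomial (Fin n) K) :
    toApolarAlgebra F p = Ideal.Quotient.mk (annR F) (p : MvPowerSeries (Fin n) K) :=
  congrArg (Ideal.Quotient.mk (annR F)) (coe_algHom_apply p)

variable [CharZero K]

theorem mem_annR_iff {F : MvPolynomial (Fin n) K} {f : MvPowerSeries (Fin n) K} :
    f ∈ annR F ↔ ∀ u, apolarPairing F (u * f) = 0 := by
  refine ⟨fun hf u => ?_, fun hf u => ?_⟩
  · rw [apolarPairing_apply, show contract (u * f) F = 0 from hf u, coeff_zero]
  · ext γ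
    have hγ : (∏ i, ((γ i).factorial : K)) ≠ 0 :=
      Finset.prod_ne_zero_iff.mpr fun i _ => Nat.cast_ne_zero.mpr (Nat.factorial_ne_zero _)
    refine (mul_eq_zero.mp ?_).resolve_left hγ
    rw [factorial_mul_coeff_contract, ← mul_assoc, hf]

theorem mem_annR_of_totalDegree_lt_order {F : MvPolynomial (Fin n) K}
    {f : MvPowerSeries (Fin n) K} (hf : F.totalDegree < f.order) : f ∈ annR F := by
  refine mem_annR_iff.mpr fun u => apolarPairing_eq_zero_of_coeff fun β hβ => ?_
  have hβF : (β.degree : ℕ∞) ≤ F.totalDegree := Nat.cast_le.mpr (le_totalDegree hβ)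
  exact MvPowerSeries.coeff_of_lt_order <| (hβF.trans_lt hf).trans_le <|
    le_add_self.trans MvPowerSeries.le_order_mul

theorem mem_annR_of_isHomogeneous {F p : MvPolynomial (Fin n) K} {d e : ℕ}
    (hF : F.IsHomogeneous (d + e)) (hp : p.IsHomogeneous e)
    (h : ∀ q : MvPolynomial (Fin n) K, q.IsHomogeneous d → apolarFunctional F (p * q) = 0) :
    (p : MvPowerSeries (Fin n) K) ∈ annR F := by
  classical
  refine mem_annR_iff.mpr fun u => ?_
  let q := homogeneousComponent d (u.truncTotal (d + 1))
  have hq : apolarPairing F (q * p : MvPowerSeries (Fin n) K) = 0 := by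
    rw [← coe_mul, ← apolarFunctional_apply, mul_comm]
    exact h q (homogeneousComponent_isHomogeneous _ _)
  rw [← hq, ← sub_eq_zero, ← map_sub, ← sub_mul]
  refine apolarPairing_eq_zero_of_coeff fun β hβ => ?_
  rw [MvPowerSeries.coeff_mul]
  refine Finset.sum_eq_zero fun ⟨a, b⟩ hab => ?_
  by_cases hb : b.degree = e
  · have ha : a.degree = d := by
      have hdeg : β.degree = d + e := not_imp_comm.mp hF.coeff_eq_zero (mem_support_iff.mp hβ)
      rwa [← Finset.HasAntidiagonal.mem_antidiagonal.mp hab, map_add, hb,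
        Nat.add_right_cancel_iff] at hdeg
    simp [q, coeff_homogeneousComponent, ha, MvPowerSeries.coeff_truncTotal]
  · rw [coeff_coe, hp.coeff_eq_zero hb, mul_zero]

theorem exists_isHomogeneous_apolarFunctional_X_mul
    {F : MvPolynomial (Fin n) K} (hnd : nondegenerate F) {d : ℕ} (hF : F.IsHomogeneous (d + 1))
    (t : Fin n → K) :
    ∃ q : MvPolynomial (Fin n) K, q.IsHomogeneous d ∧ ∀ i, apolarFunctional F (X i * q) = t i := by
  let linear : (Fin n → K) →ₗ[K] MvPolynomial (Fin n) K := Fintype.linearCombination K X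
  let B : (Fin n → K) →ₗ[K] homogeneousSubmodule (Fin n) K d →ₗ[K] K :=
    ((LinearMap.mul K (MvPolynomial (Fin n) K)).compr₂ (apolarFunctional F)).compl₁₂
      linear (homogeneousSubmodule (Fin n) K d).subtype
  have hB : Function.Injective B := by
    refine (injective_iff_map_eq_zero B).mpr fun l hl => hnd l ?_
    have linear_isHomogeneous : (linear l).IsHomogeneous 1 := by
      simp only [linear, Fintype.linearCombination_apply, smul_eq_C_mul]
      exact IsHomogeneous.sum _ _ _ fun i _ => isHomogeneous_C_mul_X _ _
    rw [linForm_eq_coe]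
    exact mem_annR_of_isHomogeneous hF linear_isHomogeneous
      fun q hq => LinearMap.congr_fun hl ⟨q, hq⟩
  obtain ⟨⟨q, hq⟩, hqt⟩ :=
    LinearMap.flip_surjective_iff₁.mpr hB (Fintype.linearCombination K t)
  refine ⟨q, hq, fun i => ?_⟩
  simpa [B, linear, Fintype.linearCombination_apply_single] using
    LinearMap.congr_fun hqt (Pi.single i 1)

theorem toApolarAlgebra_surjective (F : MvPolynomial (Fin n) K) :
    Function.Surjective (toApolarAlgebra F) := by
  intro a
  obtain ⟨u, rfl⟩ := Ideal.Quotient.mk_surjective a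
  refine ⟨u.truncTotal (F.totalDegree + 1), ?_⟩
  rw [toApolarAlgebra_apply, Ideal.Quotient.eq]
  refine mem_annR_of_totalDegree_lt_order <|
    (Nat.cast_lt.mpr F.totalDegree.lt_succ_self).trans_le <|
      MvPowerSeries.nat_le_order fun β hβ => ?_
  rw [map_sub, coeff_coe, MvPowerSeries.coeff_truncTotal _ hβ, sub_self]

theorem toApolarAlgebra_eq_zero_iff {F p : MvPolynomial (Fin n) K} :
    toApolarAlgebra F p = 0 ↔ ∀ q, apolarFunctional F (q * p) = 0 := by
  rw [toApolarAlgebra_apply, Ideal.Quotient.eq_zero_iff_mem]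
  refine ⟨fun hp q => ?_, fun hp => mem_annR_iff.mpr fun u => ?_⟩
  · rw [apolarFunctional_apply, coe_mul]
    exact mem_annR_iff.mp hp q
  · obtain ⟨q, hq⟩ := toApolarAlgebra_surjective F (Ideal.Quotient.mk _ u)
    rw [toApolarAlgebra_apply, Ideal.Quotient.eq] at hq
    have hqu := mem_annR_iff.mp hq p
    rw [mul_comm, sub_mul, map_sub, ← coe_mul, ← apolarFunctional_apply, hp] at hqu
    simpa using hqu

theorem toApolarAlgebra_eq_zero_of_mem_pow {F p : MvPolynomial (Fin n) K} {k : ℕ}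
    (hF : F.totalDegree < k) (hp : p ∈ idealOfVars (Fin n) K ^ k) : toApolarAlgebra F p = 0 :=
  toApolarAlgebra_eq_zero_iff.mpr fun q =>
    apolarFunctional_eq_zero_of_mem_pow hF (Ideal.mul_mem_left _ q hp)

section ChangeOfCoordinates

variable {φ : MvPolynomial (Fin n) K →ₐ[K] MvPolynomial (Fin n) K}

theorem toApolarAlgebra_comp_surjective (hφ : ∀ i, φ (X i) - X i ∈ idealOfVars (Fin n) K ^ 2)
    (F : MvPolynomial (Fin n) K) : Function.Surjective ((toApolarAlgebra F).comp φ) := by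
  intro a
  obtain ⟨p, rfl⟩ := toApolarAlgebra_surjective F a
  obtain ⟨q, hq⟩ := exists_map_sub_mem_pow
    (map_sub_mem_idealOfVars hφ) (fun _ => map_sub_mem_idealOfVars_sq hφ) p (F.totalDegree + 1)
  refine ⟨q, ?_⟩
  rw [AlgHom.comp_apply, ← sub_eq_zero, ← map_sub]
  exact toApolarAlgebra_eq_zero_of_mem_pow F.totalDegree.lt_succ_self hq

theorem ker_toApolarAlgebra_eq_ker_comp (hφ : ∀ i, φ (X i) - X i ∈ idealOfVars (Fin n) K ^ 2)
    {F G : MvPolynomial (Fin n) K}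
    (hFG : apolarFunctional F = apolarFunctional G ∘ₗ φ.toLinearMap) :
    RingHom.ker (toApolarAlgebra F) = RingHom.ker ((toApolarAlgebra G).comp φ) := by
  ext p
  have pullback (q : MvPolynomial (Fin n) K) :
      apolarFunctional F (q * p) = apolarFunctional G (φ q * φ p) := by
    rw [hFG, ← map_mul]; rfl
  simp only [RingHom.mem_ker, AlgHom.comp_apply, toApolarAlgebra_eq_zero_iff, pullback]
  refine ⟨fun hp r => ?_, fun hp q => hp (φ q)⟩
  obtain ⟨s, hs⟩ := toApolarAlgebra_comp_surjective hφ G (toApolarAlgebra G r)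
  rw [AlgHom.comp_apply, ← sub_eq_zero, ← map_sub, toApolarAlgebra_eq_zero_iff] at hs
  have hrs := hs (φ p)
  rw [mul_comm, sub_mul, map_sub, hp, zero_sub, neg_eq_zero] at hrs
  exact hrs

theorem nonempty_algEquiv_of_apolarFunctional_eq_comp
    (hφ : ∀ i, φ (X i) - X i ∈ idealOfVars (Fin n) K ^ 2) {F G : MvPolynomial (Fin n) K}
    (hFG : apolarFunctional F = apolarFunctional G ∘ₗ φ.toLinearMap) :
    Nonempty ((MvPowerSeries (Fin n) K ⧸ annR F) ≃ₐ[K] (MvPowerSeries (Fin n) K ⧸ annR G)) :=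
  ⟨(Ideal.quotientKerAlgEquivOfSurjective (toApolarAlgebra_surjective F)).symm.trans <|
    (Ideal.quotientEquivAlgOfEq K (ker_toApolarAlgebra_eq_ker_comp hφ hFG)).trans <|
      Ideal.quotientKerAlgEquivOfSurjective (toApolarAlgebra_comp_surjective hφ G)⟩

end ChangeOfCoordinates

end Apolarity

open Apolarity MvPolynomial in
theorem aF_cubic_plus_quadratic_iso_general
    {K : Type*} [Field K] [CharZero K] {n : ℕ}
    (F3 F2 : MvPolynomial (Fin n) K)
    (hF3 : F3.IsHomogeneous 3) (hF2 : F2.IsHomogeneous 2)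
    (hnd : nondegenerate F3) :
    Nonempty ((MvPowerSeries (Fin n) K ⧸ annR (F3 + F2)) ≃ₐ[K]
      (MvPowerSeries (Fin n) K ⧸ annR F3)) := by
  have exists_q (j : Fin n) : ∃ q : MvPolynomial (Fin n) K, q.IsHomogeneous 2 ∧
      ∀ i, apolarFunctional F3 (X i * q) = apolarFunctional F2 (X i * X j) / 2 :=
    exists_isHomogeneous_apolarFunctional_X_mul hnd hF3 _
  choose q hq hqF using exists_q
  let φ : MvPolynomial (Fin n) K →ₐ[K] MvPolynomial (Fin n) K := aeval fun i => X i + q i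
  have hφ (i : Fin n) : φ (X i) = X i + q i := aeval_X _ i
  have hqF_symm (i j : Fin n) : apolarFunctional F3 (X i * q j) + apolarFunctional F3 (X j * q i) =
      apolarFunctional F2 (X i * X j) := by
    rw [hqF, hqF, mul_comm (X j) (X i), add_halves]
  exact nonempty_algEquiv_of_apolarFunctional_eq_comp (map_X_sub_mem_idealOfVars_sq hq hφ)
    (apolarFunctional_add_eq_comp hF3 hF2 hq hqF_symm hφ)

/-- For a non-degenerate cubic form `F_3` and any quadratic form `F_2`, the
Artinian Gorenstein local algebras `A_{F_3 + F_2}` and `A_{F_3}` are isomorphic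
as `K`-algebras. -/
theorem aF_cubic_plus_quadratic_iso
    {K : Type*} [Field K] [IsAlgClosed K] [CharZero K] {n : ℕ}
    (F3 F2 : MvPolynomial (Fin n) K)
    (hF3 : F3.IsHomogeneous 3) (hF2 : F2.IsHomogeneous 2)
    (hnd : nondegenerate F3) :
    Nonempty ((MvPowerSeries (Fin n) K ⧸ annR (F3 + F2)) ≃ₐ[K]
      (MvPowerSeries (Fin n) K ⧸ annR F3)) :=
  aF_cubic_plus_quadratic_iso_general F3 F2 hF3 hF2 hnd
end

section
/- Let F, G ∈ K[y_1,…,y_n] be polynomials of degree three with top-degree (cubic) forms F_3 and G_3, such that the Artinian Gorenstein local algebras A_F and A_G both have Hilbert function {1,n,n,1}. Then A_F and A_G are isomorphic as K-algebras if and only if F_3 and G_3 are projectively equivalent, i.e. there exist an invertible linear change of coordinates φ ∈ GL_n(K) and a nonzero scalar c ∈ K with F_3 ∘ φ = c · G_3. -/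
/-- Two forms `F, G ∈ K[y_1,…,y_n]` are projectively equivalent if they agree up
to an invertible linear change of coordinates `φ ∈ GL_n(K)` and a nonzero scalar
`c`: `F ∘ φ = c • G`. -/
def projEquiv {K : Type*} [Field K] {n : ℕ} (F G : MvPolynomial (Fin n) K) : Prop :=
  ∃ φ : GL (Fin n) K, ∃ c : K, c ≠ 0 ∧
    MvPolynomial.aeval
      (fun i => ∑ j, (φ : Matrix (Fin n) (Fin n) K) i j •
        (MvPolynomial.X j : MvPolynomial (Fin n) K)) F = c • G

/-!
The apolarity pairing `f ↦ (f ∘ F)(0)` descends to a functional `l` on `A_F` whose bilinear form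
`(a, b) ↦ l (a * b)` is nondegenerate, and the algebra is recovered from the values of `l` on the
monomials in a system of generators of its maximal ideal `m`. On cubic monomials these values are
the coefficients of `F_3`, up to factorials.

Since `m ^ 4 = 0`, the values on cubic monomials depend only on the generators modulo `m ^ 2`, and
the restriction of `l` to the one-dimensional socle `m ^ 3` is unique up to a scalar. So an
isomorphism, which carries generators to generators, makes `F_3` and `G_3` projectively equivalent.

Conversely, the values on monomials of degree at most two carry no information. Because
`dim m ^ 2 / m ^ 3 = n`, the pairing `m / m ^ 2 × m ^ 2 / m ^ 3 → K` separates generators, so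
changing the generators by elements of `m ^ 2` prescribes the values in degrees one and two at
will without touching degree three, and multiplying `l` by a unit prescribes its value at `1`.
-/

open Ideal (span)
open Set (range)
open MvPolynomial (aeval)

section MultisetProducts

variable {ι A : Type*}

theorem multiset_prod_map_mem_pow [CommSemiring A] {I : Ideal A} {z : ι → A} (hz : ∀ i, z i ∈ I)
    (t : Multiset ι) : (t.map z).prod ∈ I ^ t.card := by
  induction t using Multiset.induction with
  | empty => simp
  | cons i t ih => simpa [pow_succ'] using Ideal.mul_mem_mul (hz i) ih

theorem multiset_prod_map_sub_prod_map_mem_pow [CommRing A] {I : Ideal A} {z w : ι → A}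
    (hw : ∀ i, w i ∈ I) (hzw : ∀ i, z i - w i ∈ I ^ 2) (t : Multiset ι) :
    (t.map z).prod - (t.map w).prod ∈ I ^ (t.card + 1) := by
  have hz (i) : z i ∈ I := by
    simpa using I.add_mem (Ideal.pow_le_self two_ne_zero (hzw i)) (hw i)
  induction t using Multiset.induction with
  | empty => simp
  | cons i t ih =>
    have hsplit : z i * (t.map z).prod - w i * (t.map w).prod =
        z i * ((t.map z).prod - (t.map w).prod) + (z i - w i) * (t.map w).prod := by ring
    rw [Multiset.map_cons, Multiset.map_cons, Multiset.prod_cons, Multiset.prod_cons,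
      Multiset.card_cons, hsplit]
    refine add_mem (pow_succ' I _ ▸ Ideal.mul_mem_mul (hz i) ih) ?_
    rw [show t.card + 1 + 1 = 2 + t.card by ring, pow_add]
    exact Ideal.mul_mem_mul (hzw i) (multiset_prod_map_mem_pow hw t)

theorem prod_map_toMultiset [CommMonoid A] (β : ι →₀ ℕ) (f : ι → A) :
    (β.toMultiset.map f).prod = β.prod fun i k => f i ^ k := by
  rw [Finsupp.toMultiset_map, Finsupp.prod_toMultiset,
    Finsupp.prod_mapDomain_index (by simp) (by simp [pow_add])]

theorem mvPolynomial_linearMap_ext {R M : Type*} [CommSemiring R] [AddCommMonoid M] [Module R M]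
    {f g : MvPolynomial ι R →ₗ[R] M}
    (h : ∀ t : Multiset ι, f (t.map MvPolynomial.X).prod = g (t.map MvPolynomial.X).prod) :
    f = g := by
  refine (MvPolynomial.basisMonomials ι R).ext fun β => ?_
  have hβ : (β.toMultiset.map MvPolynomial.X).prod = MvPolynomial.monomial β (1 : R) := by
    rw [prod_map_toMultiset, MvPolynomial.monomial_eq, map_one, one_mul]
  simpa [hβ] using h β.toMultiset

end MultisetProducts

section Generators

variable {ι K A : Type*} [CommRing K] [CommRing A] [Algebra K A] {x : ι → A}

theorem mul_eq_zero_of_mem_span {s r : A} (hs : ∀ i, x i * s = 0) (hr : r ∈ span (range x)) :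
    r * s = 0 :=
  (Ideal.span_le.2 (Set.range_subset_iff.2 hs) : _ ≤ (LinearMap.toSpanSingleton A A s).ker) hr

theorem exists_sub_aeval_mem_pow_succ {k : ℕ}
    (hk : ∀ a, ∃ p, a - aeval (R := K) x p ∈ span (range x) ^ k) {r : A}
    (hr : r ∈ span (range x)) : ∃ p, r - aeval (R := K) x p ∈ span (range x) ^ (k + 1) := by
  induction hr using Submodule.span_induction with
  | mem r hr =>
    obtain ⟨i, rfl⟩ := hr
    exact ⟨MvPolynomial.X i, by simp⟩
  | zero => exact ⟨0, by simp⟩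
  | add r r' _ _ h h' =>
    obtain ⟨p, hp⟩ := h
    obtain ⟨p', hp'⟩ := h'
    exact ⟨p + p', by simpa [add_sub_add_comm] using add_mem hp hp'⟩
  | smul b r hr h =>
    obtain ⟨p, hp⟩ := h
    obtain ⟨q, hq⟩ := hk b
    refine ⟨q * p, ?_⟩
    have hsplit : b * r - aeval x q * aeval x p =
        (b - aeval x q) * r + aeval x q * (r - aeval x p) := by ring
    rw [smul_eq_mul, map_mul, hsplit]
    exact add_mem (pow_succ (span (range x)) k ▸ Ideal.mul_mem_mul hq hr)
      (Ideal.mul_mem_left _ _ hp)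

theorem aeval_surjective_of_isNilpotent_span
    (hx : ∀ a, ∃ c : K, a - algebraMap K A c ∈ span (range x))
    (hnil : IsNilpotent (span (range x))) : Function.Surjective (aeval (R := K) x) := by
  have happrox (k : ℕ) (a : A) : ∃ p, a - aeval (R := K) x p ∈ span (range x) ^ k := by
    induction k generalizing a with
    | zero => simp
    | succ k ih =>
      obtain ⟨c, hc⟩ := hx a
      obtain ⟨p, hp⟩ := exists_sub_aeval_mem_pow_succ ih hc
      exact ⟨MvPolynomial.C c + p, by simpa [sub_sub] using hp⟩
  obtain ⟨k, hk⟩ := hnil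
  intro a
  obtain ⟨p, hp⟩ := happrox k a
  rw [hk, Ideal.zero_eq_bot, Ideal.mem_bot, sub_eq_zero] at hp
  exact ⟨p, hp.symm⟩

theorem exists_sub_sum_smul_mem_sq [Fintype ι]
    (hx : ∀ a, ∃ c : K, a - algebraMap K A c ∈ span (range x)) {a : A} (ha : a ∈ span (range x)) :
    ∃ v : ι → K, a - ∑ i, v i • x i ∈ span (range x) ^ 2 := by
  obtain ⟨b, rfl⟩ := Ideal.mem_span_range_iff_exists_fun.1 ha
  choose v hv using fun i => hx (b i)
  refine ⟨v, ?_⟩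
  simp only [← Finset.sum_sub_distrib, Algebra.smul_def, ← sub_mul, sq]
  exact sum_mem fun i _ => Ideal.mul_mem_mul (hv i) (Ideal.subset_span ⟨i, rfl⟩)

theorem span_range_eq_of_sub_mem_sq [Finite ι] {z : ι → A} (hnil : IsNilpotent (span (range x)))
    (hz : ∀ i, z i - x i ∈ span (range x) ^ 2) : span (range z) = span (range x) := by
  have hx (i) : x i ∈ span (range x) := Ideal.subset_span ⟨i, rfl⟩
  apply le_antisymm
  · rw [Ideal.span_le, Set.range_subset_iff]
    intro i
    simpa using add_mem (Ideal.pow_le_self two_ne_zero (hz i)) (hx i)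
  · refine Submodule.le_of_le_smul_of_le_jacobson_bot (I := span (range x))
      (Submodule.fg_span (Set.finite_range x)) ?_ ?_
    · obtain ⟨k, hk⟩ := hnil
      exact fun a ha => Ideal.radical_le_jacobson ⟨k, hk.le (Ideal.pow_mem_pow ha k)⟩
    · rw [smul_eq_mul, ← sq]
      refine Ideal.span_le.2 (Set.range_subset_iff.2 fun i => ?_)
      rw [← sub_sub_cancel (z i) (x i)]
      exact sub_mem (Ideal.mem_sup_left (Ideal.subset_span ⟨i, rfl⟩))
        (Ideal.mem_sup_right (hz i))

end Generators

section Dualizing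

variable {K A B : Type*} [CommRing K] [CommRing A] [Algebra K A] [CommRing B] [Algebra K B]

/-- A dualizing functional on a `K`-algebra `A`: the symmetric bilinear form `(a, b) ↦ l (b * a)`
has trivial kernel. On an Artinian local algebra with residue field `K` such a functional exists
exactly when the algebra is Gorenstein. -/
def IsDualizing (l : A →ₗ[K] K) : Prop :=
  ∀ a, (∀ b, l (b * a) = 0) → a = 0

namespace IsDualizing

theorem comp_mulLeft {l : A →ₗ[K] K} (hl : IsDualizing l) {u : A} (hu : IsUnit u) :
    IsDualizing (l ∘ₗ LinearMap.mulLeft K u) := by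
  intro a ha
  refine hu.mul_right_eq_zero.1 (hl _ fun b => ?_)
  simpa [mul_left_comm] using ha b

theorem smul [NoZeroDivisors K] {l : A →ₗ[K] K} (hl : IsDualizing l) {c : K} (hc : c ≠ 0) :
    IsDualizing (c • l) := fun a ha =>
  hl a fun b => by simpa [hc] using ha b

theorem comp_algEquiv {l : A →ₗ[K] K} (hl : IsDualizing l) (e : B ≃ₐ[K] A) :
    IsDualizing (l ∘ₗ e.toLinearMap) := by
  intro a ha
  refine (map_eq_zero_iff e e.injective).1 (hl _ fun b => ?_)
  simpa using ha (e.symm b)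

theorem mem_ker_iff {P : Type*} [CommRing P] [Algebra K P] {l : A →ₗ[K] K} (hl : IsDualizing l)
    {θ : P →ₐ[K] A} (hθ : Function.Surjective θ) {p : P} :
    p ∈ RingHom.ker θ ↔ ∀ q, l (θ (q * p)) = 0 := by
  refine ⟨fun hp q => by simp [RingHom.mem_ker.1 hp], fun h => hl _ fun b => ?_⟩
  obtain ⟨q, rfl⟩ := hθ b
  simpa using h q

theorem nonempty_algEquiv {P : Type*} [CommRing P] [Algebra K P] {l : A →ₗ[K] K}
    {l' : B →ₗ[K] K} (hl : IsDualizing l) (hl' : IsDualizing l') {θ : P →ₐ[K] A} {η : P →ₐ[K] B}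
    (hθ : Function.Surjective θ) (hη : Function.Surjective η) (h : ∀ p, l (θ p) = l' (η p)) :
    Nonempty (A ≃ₐ[K] B) := by
  have hker : RingHom.ker θ = RingHom.ker η := by
    ext p
    simp_rw [hl.mem_ker_iff hθ, hl'.mem_ker_iff hη, h]
  exact ⟨(Ideal.quotientKerAlgEquivOfSurjective hθ).symm.trans
    ((Ideal.quotientEquivAlgOfEq K hker).trans (Ideal.quotientKerAlgEquivOfSurjective hη))⟩

end IsDualizing

end Dualizing

/-- A presentation of a local Gorenstein `K`-algebra `A` of socle degree at most `d` by generators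
`x` of its maximal ideal and a dualizing functional `l`. -/
structure IsDualSystem {ι K A : Type*} [Field K] [CommRing A] [Algebra K A] (d : ℕ) (x : ι → A)
    (l : A →ₗ[K] K) : Prop where
  exists_sub_algebraMap_mem (a : A) : ∃ c : K, a - algebraMap K A c ∈ span (range x)
  span_pow : span (range x) ^ (d + 1) = ⊥
  isDualizing : IsDualizing l

namespace IsDualSystem

variable {ι κ K A B : Type*} [Field K] [CommRing A] [Algebra K A] [CommRing B] [Algebra K B]
  {d : ℕ} {x : ι → A} {y : κ → A} {l l' : A →ₗ[K] K}

theorem of_span_eq (h : IsDualSystem d x l) (hxy : span (range y) = span (range x)) :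
    IsDualSystem d y l where
  exists_sub_algebraMap_mem := hxy ▸ h.exists_sub_algebraMap_mem
  span_pow := hxy ▸ h.span_pow
  isDualizing := h.isDualizing

theorem comp_algEquiv (h : IsDualSystem d x l) (f : A ≃ₐ[K] B) :
    IsDualSystem d (f ∘ x) (l ∘ₗ f.symm.toLinearMap) := by
  have hspan : span (range (f ∘ x)) = (span (range x)).map f := by
    rw [Set.range_comp, Ideal.map_span]
  refine ⟨fun b => ?_, ?_, h.isDualizing.comp_algEquiv f.symm⟩
  · obtain ⟨c, hc⟩ := h.exists_sub_algebraMap_mem (f.symm b)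
    exact ⟨c, by simpa [hspan] using Ideal.mem_map_of_mem f hc⟩
  · rw [hspan, ← Ideal.map_pow, h.span_pow, Ideal.map_bot]

theorem isNilpotent_span (h : IsDualSystem d x l) : IsNilpotent (span (range x)) :=
  ⟨d + 1, h.span_pow⟩

theorem eq_zero_of_mem_pow (h : IsDualSystem d x l) {k : ℕ} (hk : d < k) {a : A}
    (ha : a ∈ span (range x) ^ k) : a = 0 := by
  simpa [h.span_pow] using Ideal.pow_le_pow_right hk ha

theorem aeval_surjective (h : IsDualSystem d x l) : Function.Surjective (aeval (R := K) x) :=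
  aeval_surjective_of_isNilpotent_span h.exists_sub_algebraMap_mem h.isNilpotent_span

theorem isIntegral (h : IsDualSystem d x l) : Algebra.IsIntegral K A where
  isIntegral a := by
    obtain ⟨c, hc⟩ := h.exists_sub_algebraMap_mem a
    have hnil : (a - algebraMap K A c) ^ (d + 1) = 0 :=
      h.eq_zero_of_mem_pow (Nat.lt_succ_self d) (Ideal.pow_mem_pow hc _)
    have : IsIntegral K (a - algebraMap K A c) :=
      IsIntegral.of_pow (Nat.succ_pos d) (hnil ▸ isIntegral_zero)
    simpa using this.add (isIntegral_algebraMap (x := c))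

theorem finite [Finite ι] (h : IsDualSystem d x l) : Module.Finite K A := by
  have := h.isIntegral
  have : Algebra.FiniteType K A := .of_surjective _ h.aeval_surjective
  exact Algebra.IsIntegral.finite

theorem span_eq_nilradical (h : IsDualSystem d x l) : span (range x) = nilradical A := by
  obtain _ | _ := subsingleton_or_nontrivial A
  · exact Subsingleton.elim _ _
  apply le_antisymm <;> intro a ha
  · exact ⟨d + 1, h.eq_zero_of_mem_pow (Nat.lt_succ_self d) (Ideal.pow_mem_pow ha _)⟩
  · obtain ⟨c, hc⟩ := h.exists_sub_algebraMap_mem a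
    have hnil : IsNilpotent (a - algebraMap K A c) :=
      ⟨d + 1, h.eq_zero_of_mem_pow (Nat.lt_succ_self d) (Ideal.pow_mem_pow hc _)⟩
    have hcnil : IsNilpotent (algebraMap K A c) := by
      simpa using (Commute.all _ _).isNilpotent_sub (mem_nilradical.1 ha) hnil
    rw [IsNilpotent.map_iff (algebraMap K A).injective, isNilpotent_iff_eq_zero] at hcnil
    simpa [hcnil] using hc

theorem eq_zero_of_forall_mul_eq_zero (h : IsDualSystem d x l) {s : A} (hs : ∀ i, x i * s = 0)
    (hls : l s = 0) : s = 0 := by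
  refine h.isDualizing s fun b => ?_
  obtain ⟨c, hc⟩ := h.exists_sub_algebraMap_mem b
  have : b * s = c • s := by
    rw [← sub_eq_zero, Algebra.smul_def, ← sub_mul, mul_eq_zero_of_mem_span hs hc]
  simp [this, hls]

theorem mul_eq_zero_of_mem_pow (h : IsDualSystem d x l) {s : A} (hs : s ∈ span (range x) ^ d)
    {r : A} (hr : r ∈ span (range x)) : r * s = 0 :=
  h.eq_zero_of_mem_pow (Nat.lt_succ_self d) (pow_succ' (span (range x)) d ▸ Ideal.mul_mem_mul hr hs)

theorem eq_zero_of_apply_eq_zero (h : IsDualSystem d x l) {s : A} (hs : s ∈ span (range x) ^ d)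
    (hls : l s = 0) : s = 0 :=
  h.eq_zero_of_forall_mul_eq_zero
    (fun i => h.mul_eq_zero_of_mem_pow hs (Ideal.subset_span ⟨i, rfl⟩)) hls

theorem exists_mem_pow_apply_eq_one (h : IsDualSystem d x l) (hd : span (range x) ^ d ≠ ⊥) :
    ∃ s ∈ span (range x) ^ d, l s = 1 := by
  obtain ⟨s, hs, hs0⟩ := Submodule.exists_mem_ne_zero_of_ne_bot hd
  have hls : l s ≠ 0 := fun hls => hs0 (h.eq_zero_of_apply_eq_zero hs hls)
  exact ⟨(l s)⁻¹ • s, Submodule.smul_of_tower_mem _ _ hs, by simp [hls]⟩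

theorem exists_apply_eq_mul (h : IsDualSystem d x l) (hd : span (range x) ^ d ≠ ⊥)
    (h' : IsDualSystem d y l') :
    ∃ c ≠ 0, ∀ s ∈ span (range x) ^ d, l s = c * l' s := by
  have hxy : span (range x) = span (range y) :=
    h.span_eq_nilradical.trans h'.span_eq_nilradical.symm
  obtain ⟨s₁, hs₁, hls₁⟩ := h.exists_mem_pow_apply_eq_one hd
  have hl's₁ : l' s₁ ≠ 0 := fun h0 => by
    simp [h'.eq_zero_of_apply_eq_zero (hxy ▸ hs₁) h0] at hls₁
  refine ⟨(l' s₁)⁻¹, inv_ne_zero hl's₁, fun s hs => ?_⟩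
  have hs0 : s - l s • s₁ = 0 := h.eq_zero_of_apply_eq_zero
    (sub_mem hs (Submodule.smul_of_tower_mem _ _ hs₁)) (by simp [hls₁])
  rw [sub_eq_zero] at hs0
  conv_rhs => rw [hs0]
  rw [map_smul, smul_eq_mul]
  field_simp

theorem exists_isUnit_apply_eq (h : IsDualSystem (d + 1) x l)
    (hd : span (range x) ^ (d + 1) ≠ ⊥) (a : K) :
    ∃ u, IsUnit u ∧ l u = a ∧ ∀ r ∈ span (range x), u * r = r := by
  obtain ⟨s, hs, hls⟩ := h.exists_mem_pow_apply_eq_one hd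
  refine ⟨1 + (a - l 1) • s, IsNilpotent.isUnit_one_add ?_, by simp [hls], fun r hr => ?_⟩
  · exact IsNilpotent.smul ⟨2, by
      rw [sq, h.mul_eq_zero_of_mem_pow hs (Ideal.pow_le_self (Nat.succ_ne_zero d) hs)]⟩ _
  · rw [add_mul, one_mul, smul_mul_assoc, mul_comm s, h.mul_eq_zero_of_mem_pow hs hr, smul_zero,
      add_zero]

theorem nonempty_algEquiv {y : ι → B} {l' : B →ₗ[K] K} (h : IsDualSystem d x l)
    (h' : IsDualSystem d y l') {u : A} (hu : IsUnit u) {c : K} (hc : c ≠ 0)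
    (hprod : ∀ t : Multiset ι, l (u * (t.map x).prod) = c * l' (t.map y).prod) :
    Nonempty (A ≃ₐ[K] B) := by
  refine (h.isDualizing.comp_mulLeft hu).nonempty_algEquiv (h'.isDualizing.smul hc)
    h.aeval_surjective h'.aeval_surjective fun p => ?_
  refine LinearMap.congr_fun (f := (l ∘ₗ LinearMap.mulLeft K u) ∘ₗ (aeval x).toLinearMap)
    (g := (c • l') ∘ₗ (aeval y).toLinearMap) (mvPolynomial_linearMap_ext fun t => ?_) p
  simpa [map_multiset_prod] using hprod t

end IsDualSystem

section LinSubst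

variable {ι κ ν K A : Type*} [Fintype ι]

/-- The linear substitution `x_i ↦ ∑ j, M j i • x_j`: the family `x`, seen as a row vector,
multiplied by the matrix `M` on the right. -/
def linSubst [CommSemiring K] [AddCommMonoid A] [Module K A] (x : ι → A) (M : Matrix ι κ K) :
    κ → A :=
  fun i => ∑ j, M j i • x j

theorem linSubst_one [DecidableEq ι] [CommSemiring K] [AddCommMonoid A] [Module K A] (x : ι → A) :
    linSubst x (1 : Matrix ι ι K) = x := by
  ext i
  simp [linSubst, Matrix.one_apply]

theorem linSubst_linSubst [Fintype κ] [CommSemiring K] [AddCommMonoid A] [Module K A] (x : ι → A)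
    (M : Matrix ι κ K) (N : Matrix κ ν K) : linSubst (linSubst x M) N = linSubst x (M * N) := by
  ext i
  simp only [linSubst, Matrix.mul_apply, Finset.smul_sum, Finset.sum_smul, smul_smul]
  rw [Finset.sum_comm]
  simp only [mul_comm]

theorem apply_linSubst_mul [CommSemiring K] [CommSemiring A] [Algebra K A] (l : A →ₗ[K] K)
    (x : ι → A) (M : Matrix ι κ K) (q : A) (i : κ) :
    l (linSubst x M i * q) = Matrix.vecMul (fun j => l (x j * q)) M i := by
  simp only [linSubst, Finset.sum_mul, smul_mul_assoc, map_sum, map_smul, smul_eq_mul,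
    Matrix.vecMul, dotProduct, mul_comm (l _)]

theorem span_range_linSubst_le [CommSemiring K] [CommSemiring A] [Algebra K A] (x : ι → A)
    (M : Matrix ι κ K) : span (range (linSubst x M)) ≤ span (range x) := by
  rw [Ideal.span_le, Set.range_subset_iff]
  exact fun i => sum_mem fun j _ => Submodule.smul_of_tower_mem _ _ (Ideal.subset_span ⟨j, rfl⟩)

theorem span_range_linSubst [DecidableEq ι] [CommRing K] [CommSemiring A] [Algebra K A]
    (x : ι → A) (φ : GL ι K) : span (range (linSubst x φ.val)) = span (range x) := by
  refine (span_range_linSubst_le x _).antisymm ?_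
  have hinv : linSubst (linSubst x φ.val) φ⁻¹.val = x := by
    rw [linSubst_linSubst, Units.mul_inv, linSubst_one]
  simpa only [hinv] using span_range_linSubst_le (linSubst x φ.val) φ⁻¹.val

end LinSubst

/-- A dual system of socle degree exactly `d + 1` for which every vector of scalars arises as
`i ↦ l (x i * q)` with `q` in the `d`-th power of the maximal ideal: the pairing
`m / m ^ 2 × m ^ d / m ^ (d + 1) → K` induced by `l` separates the generators `x`. -/
structure IsNondegenerateDualSystem {ι K A : Type*} [Field K] [CommRing A] [Algebra K A] (d : ℕ)
    (x : ι → A) (l : A →ₗ[K] K) : Prop extends IsDualSystem (d + 1) x l where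
  span_pow_ne_bot : span (range x) ^ (d + 1) ≠ ⊥
  exists_apply_mul_eq (t : ι → K) : ∃ q ∈ span (range x) ^ d, ∀ i, l (x i * q) = t i

theorem finrank_quotient_add_finrank_restrictScalars (K : Type*) {A : Type*} [Field K]
    [CommRing A] [Algebra K A] [Module.Finite K A] (I : Ideal A) :
    Module.finrank K (A ⧸ I) + Module.finrank K (I.restrictScalars K) = Module.finrank K A := by
  rw [← (Submodule.Quotient.restrictScalarsEquiv K I).finrank_eq]
  exact (I.restrictScalars K).finrank_quotient_add_finrank

namespace IsDualSystem

variable {ι K A : Type*} [Field K] [CommRing A] [Algebra K A] {d : ℕ} {x : ι → A} {l : A →ₗ[K] K}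

theorem mem_pow_of_forall_mul_eq_zero (h : IsDualSystem d x l) (hd : span (range x) ^ d ≠ ⊥)
    {q : A} (hq : ∀ i, x i * q = 0) : q ∈ span (range x) ^ d := by
  obtain ⟨s, hs, hls⟩ := h.exists_mem_pow_apply_eq_one hd
  have hxs (i) : x i * s = 0 := h.mul_eq_zero_of_mem_pow hs (Ideal.subset_span ⟨i, rfl⟩)
  have hqs : q - l q • s = 0 := h.eq_zero_of_forall_mul_eq_zero
    (fun i => by simp [mul_sub, hq, hxs]) (by simp [hls])
  rw [sub_eq_zero.1 hqs]
  exact Submodule.smul_of_tower_mem _ _ hs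

theorem isNondegenerateDualSystem [Fintype ι] (h : IsDualSystem (d + 1) x l)
    (hne : span (range x) ^ (d + 1) ≠ ⊥)
    (hcard : Fintype.card ι ≤ Module.finrank K (A ⧸ span (range x) ^ (d + 1)) -
      Module.finrank K (A ⧸ span (range x) ^ d)) :
    IsNondegenerateDualSystem d x l := by
  have := h.finite
  set I := (span (range x) ^ d).restrictScalars K
  set J := (span (range x) ^ (d + 1)).restrictScalars K
  let Φ : I →ₗ[K] ι → K := (LinearMap.pi fun i => l ∘ₗ LinearMap.mulLeft K (x i)).domRestrict I
  have hker : Φ.ker.map I.subtype ≤ J := by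
    rintro _ ⟨⟨q, hqI⟩, hq, rfl⟩
    refine h.mem_pow_of_forall_mul_eq_zero hne fun i => h.eq_zero_of_apply_eq_zero ?_ ?_
    · rw [pow_succ']
      exact Ideal.mul_mem_mul (Ideal.subset_span ⟨i, rfl⟩) hqI
    · exact congrFun hq i
  have hkerJ : Module.finrank K Φ.ker ≤ Module.finrank K J := by
    rw [← Submodule.finrank_map_subtype_eq I Φ.ker]
    exact Submodule.finrank_mono hker
  have hAI : Module.finrank K (A ⧸ span (range x) ^ d) + Module.finrank K I = Module.finrank K A :=
    finrank_quotient_add_finrank_restrictScalars K _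
  have hAJ : Module.finrank K (A ⧸ span (range x) ^ (d + 1)) + Module.finrank K J =
      Module.finrank K A := finrank_quotient_add_finrank_restrictScalars K _
  have hrange : Φ.range = ⊤ := by
    apply Submodule.eq_top_of_finrank_eq
    apply (Submodule.finrank_le _).antisymm
    have := Φ.finrank_range_add_finrank_ker
    rw [Module.finrank_fintype_fun_eq_card]
    omega
  refine ⟨h, hne, fun t => ?_⟩
  obtain ⟨⟨q, hq⟩, hqt⟩ := LinearMap.range_eq_top.1 hrange t
  exact ⟨q, hq, congrFun hqt⟩

end IsDualSystem

namespace IsNondegenerateDualSystem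

variable {ι K A B : Type*} [Field K] [CommRing A] [Algebra K A] [CommRing B]
  [Algebra K B] {d : ℕ} {x y : ι → A} {l l' : A →ₗ[K] K}

theorem exists_sub_mem_sq_apply_eq (h2 : (2 : K) ≠ 0)
    (h : IsNondegenerateDualSystem 2 x l) (p : ι → K) {Q : ι → ι → K} (hQ : ∀ i j, Q i j = Q j i) :
    ∃ z : ι → A, (∀ i, z i - x i ∈ span (range x) ^ 2) ∧ (∀ i, l (z i) = p i) ∧
      ∀ i j, l (z i * z j) = Q i j := by
  have hx (i) : x i ∈ span (range x) := Ideal.subset_span ⟨i, rfl⟩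
  obtain ⟨s, hs, hls⟩ := h.exists_mem_pow_apply_eq_one h.span_pow_ne_bot
  -- Moving `x i` by `q i` and `x j` by `q j` changes `l (x i * x j)` twice, hence the half.
  choose q hq hlq using fun j => h.exists_apply_mul_eq fun i => (Q i j - l (x i * x j)) / 2
  have hxs (i) : x i * s = 0 := h.mul_eq_zero_of_mem_pow hs (hx i)
  have hw (i) : q i + (p i - l (x i) - l (q i)) • s ∈ span (range x) ^ 2 :=
    add_mem (hq i) (Submodule.smul_of_tower_mem _ _ (Ideal.pow_le_pow_right (by norm_num) hs))
  refine ⟨fun i => x i + (q i + (p i - l (x i) - l (q i)) • s), fun i => by simpa using hw i,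
    fun i => by simp [hls], fun i j => ?_⟩
  set w := fun i => q i + (p i - l (x i) - l (q i)) • s
  have hxw (i j) : l (x i * w j) = (Q i j - l (x i * x j)) / 2 := by
    simp [w, mul_add, hxs, hlq]
  have hww : w i * w j = 0 := h.eq_zero_of_mem_pow (k := 2 + 2) (by norm_num)
    (pow_add (span (range x)) 2 2 ▸ Ideal.mul_mem_mul (hw i) (hw j))
  calc l ((x i + w i) * (x j + w j))
      = l (x i * x j) + l (x i * w j) + l (x j * w i) + l (w i * w j) := by
        simp only [← map_add]
        ring_nf
    _ = Q i j := by
        rw [hxw, hxw, hww, map_zero, hQ j i, mul_comm (x j)]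
        field_simp
        ring

theorem nonempty_algEquiv_of_apply_cubic_eq [Finite ι] (h2 : (2 : K) ≠ 0)
    (h : IsNondegenerateDualSystem 2 x l) {y : ι → B} {l' : B →ₗ[K] K} (h' : IsDualSystem 3 y l')
    {c : K} (hc : c ≠ 0)
    (hcubic : ∀ t : Multiset ι, t.card = 3 → l (t.map x).prod = c * l' (t.map y).prod) :
    Nonempty (A ≃ₐ[K] B) := by
  obtain ⟨z, hzx, hz1, hz2⟩ := h.exists_sub_mem_sq_apply_eq h2 (fun i => c * l' (y i))
    (Q := fun i j => c * l' (y i * y j)) (fun i j => by rw [mul_comm (y i)])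
  have hz : IsDualSystem 3 z l :=
    h.of_span_eq (span_range_eq_of_sub_mem_sq h.isNilpotent_span hzx)
  have hxm (i) : x i ∈ span (range x) := Ideal.subset_span ⟨i, rfl⟩
  have hzm (i) : z i ∈ span (range x) := by
    simpa using add_mem (Ideal.pow_le_self two_ne_zero (hzx i)) (hxm i)
  have hym (i) : y i ∈ span (range y) := Ideal.subset_span ⟨i, rfl⟩
  obtain ⟨u, hu, hu1, hur⟩ := h.exists_isUnit_apply_eq h.span_pow_ne_bot (c * l' 1)
  refine hz.nonempty_algEquiv h' hu hc fun t => ?_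
  obtain rfl | ht0 := eq_or_ne t 0
  · simpa using hu1
  have htm : (t.map z).prod ∈ span (range x) :=
    Ideal.pow_le_self (Multiset.card_eq_zero.not.2 ht0) (multiset_prod_map_mem_pow hzm t)
  rw [hur _ htm]
  obtain ht | ht | ht | ht : t.card = 1 ∨ t.card = 2 ∨ t.card = 3 ∨ 3 < t.card := by
    have := Multiset.card_pos.2 ht0
    omega
  · obtain ⟨i, rfl⟩ := Multiset.card_eq_one.1 ht
    simpa using hz1 i
  · obtain ⟨i, j, rfl⟩ := Multiset.card_eq_two.1 ht
    simpa using hz2 i j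
  · have hsub : (t.map z).prod - (t.map x).prod ∈ span (range x) ^ (3 + 1) :=
      ht ▸ multiset_prod_map_sub_prod_map_mem_pow hxm hzx t
    rw [← hcubic t ht, sub_eq_zero.1 (h.eq_zero_of_mem_pow (Nat.lt_succ_self 3) hsub)]
  · rw [h.eq_zero_of_mem_pow ht (multiset_prod_map_mem_pow hzm t),
      h'.eq_zero_of_mem_pow ht (multiset_prod_map_mem_pow hym t), map_zero, map_zero, mul_zero]

variable [Fintype ι] [DecidableEq ι]

theorem comp_linSubst (h : IsNondegenerateDualSystem d x l) (φ : GL ι K) :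
    IsNondegenerateDualSystem d (linSubst x φ.val) l := by
  have hspan := span_range_linSubst x φ
  refine ⟨h.of_span_eq hspan, hspan ▸ h.span_pow_ne_bot, fun t => ?_⟩
  obtain ⟨q, hq, hqt⟩ := h.exists_apply_mul_eq (Matrix.vecMul t φ⁻¹.val)
  refine ⟨q, hspan ▸ hq, fun i => ?_⟩
  rw [apply_linSubst_mul, funext hqt, Matrix.vecMul_vecMul, Units.inv_mul, Matrix.vecMul_one]

theorem isUnit_of_sub_linSubst_mem_sq (h : IsNondegenerateDualSystem d x l)
    (hxy : span (range x) = span (range y)) {M : Matrix ι ι K}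
    (hM : ∀ i, y i - linSubst x M i ∈ span (range x) ^ 2) : IsUnit M := by
  rw [← Matrix.vecMul_injective_iff_isUnit, ← Matrix.coe_vecMulLinear, ← LinearMap.ker_eq_bot,
    LinearMap.ker_eq_bot']
  intro u hu
  obtain ⟨q, hq, hqu⟩ := h.exists_apply_mul_eq u
  have hyq (i) : y i * q = 0 := by
    have hlin : y i * q = linSubst x M i * q := by
      rw [← sub_eq_zero, ← sub_mul]
      refine h.eq_zero_of_mem_pow (k := 2 + d) (by omega) ?_
      exact pow_add (span (range x)) 2 d ▸ Ideal.mul_mem_mul (hM i) hq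
    refine h.eq_zero_of_apply_eq_zero ?_ ?_
    · rw [pow_succ']
      exact Ideal.mul_mem_mul (hxy ▸ Ideal.subset_span ⟨i, rfl⟩) hq
    · rw [hlin, apply_linSubst_mul, funext hqu]
      exact congrFun hu i
  ext j
  rw [← hqu j, mul_eq_zero_of_mem_span hyq (hxy ▸ Ideal.subset_span ⟨j, rfl⟩), map_zero,
    Pi.zero_apply]

theorem exists_linSubst_apply_eq (h : IsNondegenerateDualSystem d x l)
    (h' : IsDualSystem (d + 1) y l') :
    ∃ φ : GL ι K, ∃ c ≠ 0, ∀ t : Multiset ι, t.card = d + 1 →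
      l (t.map (linSubst x φ.val)).prod = c * l' (t.map y).prod := by
  have hxy : span (range x) = span (range y) :=
    h.span_eq_nilradical.trans h'.span_eq_nilradical.symm
  have hy (i) : y i ∈ span (range x) := hxy ▸ Ideal.subset_span ⟨i, rfl⟩
  choose v hv using fun i => exists_sub_sum_smul_mem_sq h.exists_sub_algebraMap_mem (hy i)
  obtain ⟨φ, hφ⟩ : IsUnit (Matrix.of v).transpose := h.isUnit_of_sub_linSubst_mem_sq hxy hv
  have hyφ (i) : y i - linSubst x φ.val i ∈ span (range x) ^ 2 := hφ ▸ hv i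
  obtain ⟨c, hc, hlc⟩ := h.exists_apply_eq_mul h.span_pow_ne_bot h'
  refine ⟨φ, c, hc, fun t ht => ?_⟩
  have hprod : (t.map y).prod = (t.map (linSubst x φ.val)).prod := by
    rw [← sub_eq_zero]
    refine h.eq_zero_of_mem_pow (Nat.lt_succ_self _)
      (ht ▸ multiset_prod_map_sub_prod_map_mem_pow (fun i => ?_) hyφ t)
    exact span_range_linSubst_le x _ (Ideal.subset_span ⟨i, rfl⟩)
  rw [← hprod]
  exact hlc _ (ht ▸ multiset_prod_map_mem_pow hy t)

theorem nonempty_algEquiv_iff (h2 : (2 : K) ≠ 0) (h : IsNondegenerateDualSystem 2 x l)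
    {y : ι → B} {l' : B →ₗ[K] K} (h' : IsDualSystem 3 y l') :
    Nonempty (A ≃ₐ[K] B) ↔ ∃ φ : GL ι K, ∃ c ≠ 0, ∀ t : Multiset ι, t.card = 3 →
      l (t.map (linSubst x φ.val)).prod = c * l' (t.map y).prod := by
  refine ⟨fun ⟨f⟩ => ?_, fun ⟨φ, c, hc, hcubic⟩ =>
    (h.comp_linSubst φ).nonempty_algEquiv_of_apply_cubic_eq h2 h' hc hcubic⟩
  obtain ⟨φ, c, hc, hφ⟩ := h.exists_linSubst_apply_eq (h'.comp_algEquiv f.symm)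
  refine ⟨φ, c, hc, fun t ht => ?_⟩
  simpa [map_multiset_prod] using hφ t ht

end IsNondegenerateDualSystem

section PowerSeriesIdeal

variable {σ R : Type*} [CommRing R]

theorem mem_span_X_image_of_coeff_eq_zero {s : Finset σ} {f : MvPowerSeries σ R}
    (hf : ∀ β : σ →₀ ℕ, (∀ i ∈ s, β i = 0) → MvPowerSeries.coeff β f = 0) :
    f ∈ span (MvPowerSeries.X '' (s : Set σ)) := by
  classical
  induction s using Finset.induction generalizing f with
  | empty =>
    have : f = 0 := by
      ext β
      simpa using hf β
    simp [this]
  | insert i s _ ih =>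
    let g : MvPowerSeries σ R := fun β => if β i = 0 then MvPowerSeries.coeff β f else 0
    have hg (β) : MvPowerSeries.coeff β g = if β i = 0 then MvPowerSeries.coeff β f else 0 := rfl
    rw [Finset.coe_insert, Set.image_insert_eq, Ideal.mem_span_insert']
    have hdvd : MvPowerSeries.X i ∣ f - g :=
      MvPowerSeries.X_dvd_iff.2 fun β hβ => by simp [hg, hβ]
    obtain ⟨q, hq⟩ := hdvd
    refine ⟨-q, ?_⟩
    have hfq : f + -q * MvPowerSeries.X i = g := by
      rw [neg_mul, mul_comm, ← hq]
      ring
    rw [hfq]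
    refine ih fun β hβ => ?_
    rw [hg]
    split_ifs with hi
    · exact hf β (by simpa [hi] using hβ)
    · rfl

theorem ker_constantCoeff_eq_span_X [Finite σ] :
    RingHom.ker (MvPowerSeries.constantCoeff (σ := σ) (R := R)) =
      span (range MvPowerSeries.X) := by
  have := Fintype.ofFinite σ
  refine le_antisymm (fun f hf => ?_) ?_
  · have hspan : f ∈ span (MvPowerSeries.X '' ((Finset.univ : Finset σ) : Set σ)) :=
      mem_span_X_image_of_coeff_eq_zero fun β hβ => by
        obtain rfl : β = 0 := Finsupp.ext fun i => hβ i (Finset.mem_univ i)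
        simpa using hf
    simpa using hspan
  · rw [Ideal.span_le, Set.range_subset_iff]
    exact MvPowerSeries.constantCoeff_X

theorem le_order_of_mem_ker_constantCoeff_pow {k : ℕ} {f : MvPowerSeries σ R}
    (hf : f ∈ RingHom.ker (MvPowerSeries.constantCoeff (σ := σ) (R := R)) ^ k) : k ≤ f.order := by
  induction k generalizing f with
  | zero => simp
  | succ k ih =>
    rw [pow_succ'] at hf
    refine Submodule.mul_induction_on hf (fun r hr g hg => ?_)
      fun g g' hg hg' => (le_min hg hg').trans MvPowerSeries.min_order_le_add
    calc ((k + 1 : ℕ) : ℕ∞) = 1 + k := by push_cast; ring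
      _ ≤ r.order + g.order :=
        add_le_add (MvPowerSeries.one_le_order_iff_constCoeff_eq_zero.2 hr) (ih hg)
      _ ≤ (r * g).order := MvPowerSeries.le_order_mul

end PowerSeriesIdeal

section Apolarity

open MvPolynomial (X monomial pderiv)
open scoped Nat

variable {σ R : Type*}

/-- The factorial `∏ i, (β i)!` of a multi-index. -/
noncomputable def multiFactorial (β : σ →₀ ℕ) : ℕ :=
  β.prod fun _ k => k !

theorem multiFactorial_add_single (β : σ →₀ ℕ) (i : σ) :
    multiFactorial (β + Finsupp.single i 1) = (β i + 1) * multiFactorial β := by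
  unfold multiFactorial
  rw [← Finsupp.mul_prod_erase' β i _ (fun _ => Nat.factorial_zero),
    ← Finsupp.mul_prod_erase' (β + _) i _ (fun _ => Nat.factorial_zero), ← mul_assoc]
  simp [Nat.factorial_succ, Finsupp.erase_add]

theorem multiFactorial_dvd_factorial_degree (β : σ →₀ ℕ) : multiFactorial β ∣ β.degree ! :=
  Nat.prod_factorial_dvd_factorial_sum _ _

theorem cast_multiFactorial_ne_zero [CommRing R] {d : ℕ} (hd : (d ! : R) ≠ 0) {β : σ →₀ ℕ}
    (hβ : β.degree ≤ d) : (multiFactorial β : R) ≠ 0 := by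
  obtain ⟨k, hk⟩ := (multiFactorial_dvd_factorial_degree β).trans (Nat.factorial_dvd_factorial hβ)
  intro h
  simp [hk, h] at hd

/-- The apolarity pairing of a polynomial `F` and a power series `f`: the value at the origin of
the polynomial obtained by letting `f` act on `F` as a differential operator. -/
noncomputable def apolarPairing [CommRing R] :
    MvPolynomial σ R →ₗ[R] MvPowerSeries σ R →ₗ[R] R :=
  (MvPolynomial.basisMonomials σ R).constr R fun β =>
    (multiFactorial β : R) • MvPowerSeries.coeff β

theorem apolarPairing_monomial [CommRing R] (β : σ →₀ ℕ) (c : R) (f : MvPowerSeries σ R) :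
    apolarPairing (monomial β c) f = c * (multiFactorial β * MvPowerSeries.coeff β f) := by
  have hβ : monomial β c = c • MvPolynomial.basisMonomials σ R β := by
    simp [MvPolynomial.smul_monomial]
  rw [hβ, map_smul, apolarPairing, Module.Basis.constr_basis]
  simp

theorem apolarPairing_eq_sum [CommRing R] (F : MvPolynomial σ R) (f : MvPowerSeries σ R) :
    apolarPairing F f = ∑ β ∈ F.support,
      MvPolynomial.coeff β F * (multiFactorial β * MvPowerSeries.coeff β f) := by
  conv_lhs => rw [F.as_sum, map_sum, LinearMap.sum_apply]
  simp only [apolarPairing_monomial]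

theorem apolarPairing_apply_monomial_one [CommRing R] (F : MvPolynomial σ R) (β : σ →₀ ℕ) :
    apolarPairing F (MvPowerSeries.monomial β 1) = MvPolynomial.coeff β F * multiFactorial β := by
  classical
  simp +contextual [apolarPairing_eq_sum, MvPowerSeries.coeff_monomial]

theorem apolarPairing_eq_zero_of_totalDegree_lt_order [CommRing R] {F : MvPolynomial σ R}
    {f : MvPowerSeries σ R} (h : F.totalDegree < f.order) : apolarPairing F f = 0 := by
  rw [apolarPairing_eq_sum]
  refine Finset.sum_eq_zero fun β hβ => ?_
  have hdeg : β.degree ≤ F.totalDegree := MvPolynomial.le_totalDegree hβ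
  rw [MvPowerSeries.coeff_of_lt_order (lt_of_le_of_lt (by exact_mod_cast hdeg) h), mul_zero,
    mul_zero]

theorem apolarPairing_one [CommRing R] (F : MvPolynomial σ R) :
    apolarPairing F 1 = MvPolynomial.constantCoeff F := by
  rw [← MvPowerSeries.monomial_zero_one, apolarPairing_apply_monomial_one,
    MvPolynomial.constantCoeff_eq]
  simp [multiFactorial]

theorem apolarPairing_X_mul [CommRing R] (F : MvPolynomial σ R) (i : σ) (f : MvPowerSeries σ R) :
    apolarPairing F (MvPowerSeries.X i * f) = apolarPairing (pderiv i F) f := by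
  classical
  induction F using MvPolynomial.induction_on' with
  | monomial β c =>
    rw [MvPolynomial.pderiv_monomial, apolarPairing_monomial, apolarPairing_monomial,
      MvPowerSeries.X_def, MvPowerSeries.coeff_monomial_mul, one_mul]
    obtain hβ | hβ := Nat.eq_zero_or_pos (β i)
    · simp [hβ]
    · obtain ⟨γ, rfl⟩ : ∃ γ, β = γ + Finsupp.single i 1 :=
        ⟨_, (tsub_add_cancel_of_le (Finsupp.single_le_iff.2 hβ)).symm⟩
      rw [if_pos le_add_self, add_tsub_cancel_right, multiFactorial_add_single]
      simp only [Finsupp.add_apply, Finsupp.single_eq_same, Nat.cast_mul, mul_assoc]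
  | add F G hF hG => simp only [map_add, LinearMap.add_apply, hF, hG]

variable [Fintype σ]

theorem pderiv_aeval_linSubst [CommRing R] (M : Matrix σ σ R) (H : MvPolynomial σ R) (i : σ) :
    pderiv i (aeval (R := R) (linSubst (X : σ → MvPolynomial σ R) M) H) =
      ∑ j, M i j • aeval (R := R) (linSubst (X : σ → MvPolynomial σ R) M) (pderiv j H) := by
  classical
  induction H using MvPolynomial.induction_on with
  | C c => simp [MvPolynomial.algebraMap_eq]
  | add p q hp hq => simp only [map_add, hp, hq, smul_add, Finset.sum_add_distrib]
  | mul_X p k hp =>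
    have hX : pderiv i (linSubst (X : σ → MvPolynomial σ R) M k) = algebraMap R _ (M i k) := by
      simp [linSubst, MvPolynomial.pderiv_X, Pi.single_apply, Algebra.smul_def]
    simp only [map_mul, MvPolynomial.aeval_X, MvPolynomial.pderiv_mul, hp, hX,
      MvPolynomial.pderiv_X, map_add, smul_add, Finset.sum_add_distrib, Finset.sum_mul,
      smul_mul_assoc]
    congr 1
    simp [Pi.single_apply, Algebra.smul_def, mul_comm, apply_ite]

theorem constantCoeff_aeval_linSubst [CommRing R] (M : Matrix σ σ R) (H : MvPolynomial σ R) :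
    MvPolynomial.constantCoeff (aeval (R := R) (linSubst (X : σ → MvPolynomial σ R) M) H) =
      MvPolynomial.constantCoeff H := by
  induction H using MvPolynomial.induction_on with
  | C c => simp
  | add p q hp hq => simp only [map_add, hp, hq]
  | mul_X p k => simp [linSubst]

theorem apolarPairing_aeval_linSubst [CommRing R] (M : Matrix σ σ R) (H : MvPolynomial σ R)
    (t : Multiset σ) :
    apolarPairing (aeval (R := R) (linSubst (X : σ → MvPolynomial σ R) M) H)
        (t.map MvPowerSeries.X).prod =
      apolarPairing H (t.map (linSubst MvPowerSeries.X M.transpose)).prod := by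
  induction t using Multiset.induction generalizing H with
  | empty =>
    rw [Multiset.map_zero, Multiset.map_zero, Multiset.prod_zero, apolarPairing_one,
      constantCoeff_aeval_linSubst, apolarPairing_one]
  | cons i t ih =>
    simp only [Multiset.map_cons, Multiset.prod_cons, apolarPairing_X_mul,
      pderiv_aeval_linSubst, map_sum, map_smul, LinearMap.sum_apply, LinearMap.smul_apply, ih]
    simp only [linSubst, Finset.sum_mul, map_sum, smul_mul_assoc, map_smul, apolarPairing_X_mul,
      Matrix.transpose_apply]

end Apolarity

section Contract

open MvPolynomial (X monomial)
open scoped Nat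

variable {K : Type*} [Field K] {n : ℕ}

theorem contract_monomial (f : MvPowerSeries (Fin n) K) (β : Fin n →₀ ℕ) (c : K) :
    contract f (monomial β c) = c • ∑ α ∈ Finset.Iic β,
      (MvPowerSeries.coeff α f * ∏ i, ((β i).descFactorial (α i) : K)) • monomial (β - α) 1 := by
  have hβ : monomial β c = c • MvPolynomial.basisMonomials (Fin n) K β := by
    simp [MvPolynomial.smul_monomial]
  rw [hβ, map_smul, contract, Module.Basis.constr_basis]

theorem totalDegree_contract_le (f : MvPowerSeries (Fin n) K) (F : MvPolynomial (Fin n) K) :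
    (contract f F).totalDegree ≤ F.totalDegree := by
  conv_lhs => rw [F.as_sum, map_sum]
  refine MvPolynomial.totalDegree_finsetSum_le fun β hβ => ?_
  rw [contract_monomial]
  refine (MvPolynomial.totalDegree_smul_le _ _).trans
    (MvPolynomial.totalDegree_finsetSum_le fun α _ => ?_)
  calc _ ≤ (monomial (β - α) (1 : K)).totalDegree := MvPolynomial.totalDegree_smul_le _ _
    _ ≤ (β - α).degree := MvPolynomial.totalDegree_monomial_le _ _
    _ ≤ β.degree := Finsupp.degree_mono tsub_le_self
    _ ≤ F.totalDegree := MvPolynomial.le_totalDegree hβ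

theorem multiFactorial_sub_mul_prod_descFactorial {α β : Fin n →₀ ℕ} (h : α ≤ β) :
    multiFactorial (β - α) * ∏ i, (β i).descFactorial (α i) = multiFactorial β := by
  simp only [multiFactorial, Finsupp.prod_fintype _ _ fun _ => Nat.factorial_zero,
    ← Finset.prod_mul_distrib, Finsupp.tsub_apply]
  exact Finset.prod_congr rfl fun i _ => Nat.factorial_mul_descFactorial (h i)

theorem coeff_contract_mul_multiFactorial (f : MvPowerSeries (Fin n) K)
    (F : MvPolynomial (Fin n) K) (γ : Fin n →₀ ℕ) :
    MvPolynomial.coeff γ (contract f F) * multiFactorial γ =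
      apolarPairing F (MvPowerSeries.monomial γ 1 * f) := by
  induction F using MvPolynomial.induction_on' with
  | monomial β c =>
    rw [contract_monomial, apolarPairing_monomial, MvPowerSeries.coeff_monomial_mul, one_mul,
      MvPolynomial.coeff_smul, MvPolynomial.coeff_sum, smul_eq_mul, mul_assoc, Finset.sum_mul]
    congr 1
    split_ifs with hγ
    · rw [Finset.sum_eq_single_of_mem (β - γ) (Finset.mem_Iic.2 tsub_le_self)]
      · rw [← multiFactorial_sub_mul_prod_descFactorial (tsub_le_self : β - γ ≤ β),
          tsub_tsub_cancel_of_le hγ, MvPolynomial.coeff_smul, MvPolynomial.coeff_monomial,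
          if_pos rfl, smul_eq_mul]
        push_cast
        ring
      · intro α hα hne
        have : β - α ≠ γ := by
          rintro rfl
          exact hne (tsub_tsub_cancel_of_le (Finset.mem_Iic.1 hα)).symm
        simp [MvPolynomial.coeff_monomial, this]
    · rw [mul_zero]
      refine Finset.sum_eq_zero fun α _ => ?_
      have : β - α ≠ γ := fun h => hγ (h ▸ tsub_le_self)
      simp [MvPolynomial.coeff_monomial, this]
  | add F G hF hG => simp only [map_add, MvPolynomial.coeff_add, add_mul, LinearMap.add_apply,
      hF, hG]

theorem apolarPairing_eq_zero_of_mem_annR {F : MvPolynomial (Fin n) K}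
    {f : MvPowerSeries (Fin n) K} (hf : f ∈ annR F) : apolarPairing F f = 0 := by
  have hcontract : contract f F = 0 := by simpa using hf 1
  simpa [hcontract] using (coeff_contract_mul_multiFactorial f F 0).symm

theorem mem_annR_iff {d : ℕ} {F : MvPolynomial (Fin n) K} (hF : F.totalDegree ≤ d)
    (hd : (d ! : K) ≠ 0) {f : MvPowerSeries (Fin n) K} :
    f ∈ annR F ↔ ∀ u, apolarPairing F (u * f) = 0 := by
  refine ⟨fun hf u => apolarPairing_eq_zero_of_mem_annR (Ideal.mul_mem_left _ u hf),
    fun h u => MvPolynomial.ext _ _ fun γ => ?_⟩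
  rw [MvPolynomial.coeff_zero]
  obtain hγ | hγ := le_or_gt γ.degree d
  · have hmul := coeff_contract_mul_multiFactorial (u * f) F γ
    rw [← mul_assoc, h] at hmul
    exact (mul_eq_zero.1 hmul).resolve_right (cast_multiFactorial_ne_zero hd hγ)
  · exact MvPolynomial.coeff_eq_zero_of_totalDegree_lt
      (((totalDegree_contract_le _ F).trans hF).trans_lt hγ)

theorem mxR_pow_le_annR {d : ℕ} {F : MvPolynomial (Fin n) K} (hF : F.totalDegree ≤ d)
    (hd : (d ! : K) ≠ 0) : mxR K n ^ (d + 1) ≤ annR F := by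
  intro f hf
  refine (mem_annR_iff hF hd).2 fun u => apolarPairing_eq_zero_of_totalDegree_lt_order ?_
  calc (F.totalDegree : ℕ∞) < (d + 1 : ℕ) := by exact_mod_cast Nat.lt_succ_of_le hF
    _ ≤ (u * f).order := le_order_of_mem_ker_constantCoeff_pow (Ideal.mul_mem_left _ u hf)

end Contract

section HomogeneousForms

open MvPolynomial (X)
open scoped Nat

variable {σ R : Type*} [CommRing R]

theorem eq_of_apolarPairing_prod_X_eq [NoZeroDivisors R] {d : ℕ} (hd : (d ! : R) ≠ 0)
    {H H' : MvPolynomial σ R} (hH : H.IsHomogeneous d) (hH' : H'.IsHomogeneous d)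
    (h : ∀ t : Multiset σ, t.card = d →
      apolarPairing H (t.map MvPowerSeries.X).prod =
        apolarPairing H' (t.map MvPowerSeries.X).prod) : H = H' := by
  ext β
  obtain hβ | hβ := eq_or_ne β.degree d
  · have hmonomial : (β.toMultiset.map MvPowerSeries.X).prod =
        MvPowerSeries.monomial (R := R) β 1 := by
      rw [MvPowerSeries.monomial_one_eq, prod_map_toMultiset]
    have hpairing := h β.toMultiset ((Finsupp.card_toMultiset β).trans hβ)
    rw [hmonomial, apolarPairing_apply_monomial_one, apolarPairing_apply_monomial_one] at hpairing
    exact mul_right_cancel₀ (cast_multiFactorial_ne_zero hd hβ.le) hpairing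
  · rw [hH.coeff_eq_zero hβ, hH'.coeff_eq_zero hβ]

theorem isHomogeneous_aeval_linSubst_X [Fintype σ] {d : ℕ} {H : MvPolynomial σ R}
    (hH : H.IsHomogeneous d) (M : Matrix σ σ R) :
    (aeval (R := R) (linSubst (X : σ → MvPolynomial σ R) M) H).IsHomogeneous d := by
  have hlinear (i) : (linSubst (X : σ → MvPolynomial σ R) M i).IsHomogeneous 1 :=
    MvPolynomial.IsHomogeneous.sum _ _ _ fun j _ => by
      rw [MvPolynomial.smul_eq_C_mul]
      exact (MvPolynomial.isHomogeneous_X R j).C_mul _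
  simpa using hH.aeval _ hlinear

theorem aeval_linSubst_X_eq_smul_iff [NoZeroDivisors R] [Fintype σ] {d : ℕ} (hd : (d ! : R) ≠ 0)
    {H H' : MvPolynomial σ R} (hH : H.IsHomogeneous d) (hH' : H'.IsHomogeneous d)
    (M : Matrix σ σ R) (c : R) :
    aeval (R := R) (linSubst (X : σ → MvPolynomial σ R) M) H = c • H' ↔
      ∀ t : Multiset σ, t.card = d →
        apolarPairing H (t.map (linSubst MvPowerSeries.X M.transpose)).prod =
          c * apolarPairing H' (t.map MvPowerSeries.X).prod := by
  simp only [← apolarPairing_aeval_linSubst]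
  refine ⟨fun h t _ => by rw [h, map_smul, LinearMap.smul_apply, smul_eq_mul], fun h => ?_⟩
  refine eq_of_apolarPairing_prod_X_eq hd (isHomogeneous_aeval_linSubst_X hH M) ?_ ?_
  · rw [MvPolynomial.smul_eq_C_mul]
    exact hH'.C_mul c
  · simpa using h

end HomogeneousForms

section ApolarAlgebra

variable {K : Type*} [Field K] {n d : ℕ} {F Fd : MvPolynomial (Fin n) K}

/-- The class of the variable `x_i` in the algebra `A_F = K[[x_1,…,x_n]] ⧸ Ann(F)`. -/
noncomputable def apolarGen (F : MvPolynomial (Fin n) K) (i : Fin n) :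
    MvPowerSeries (Fin n) K ⧸ annR F :=
  Ideal.Quotient.mk (annR F) (MvPowerSeries.X i)

/-- The functional on `A_F` induced by the apolarity pairing with `F`. -/
noncomputable def apolarFunctional (F : MvPolynomial (Fin n) K) :
    (MvPowerSeries (Fin n) K ⧸ annR F) →ₗ[K] K :=
  ((annR F).restrictScalars K).liftQ (apolarPairing F)
      (fun _ hf => apolarPairing_eq_zero_of_mem_annR hf) ∘ₗ
    (Submodule.Quotient.restrictScalarsEquiv K (annR F)).symm.toLinearMap

theorem apolarFunctional_mk (F : MvPolynomial (Fin n) K) (f : MvPowerSeries (Fin n) K) :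
    apolarFunctional F (Ideal.Quotient.mk (annR F) f) = apolarPairing F f :=
  rfl

theorem span_range_apolarGen (F : MvPolynomial (Fin n) K) :
    span (range (apolarGen F)) = (mxR K n).map (Ideal.Quotient.mk (annR F)) := by
  rw [mxR, ker_constantCoeff_eq_span_X, Ideal.map_span, ← Set.range_comp]
  rfl

theorem isDualSystem_apolarGen (hF : F.totalDegree ≤ d) (hd : (d.factorial : K) ≠ 0) :
    IsDualSystem d (apolarGen F) (apolarFunctional F) where
  exists_sub_algebraMap_mem a := by
    obtain ⟨f, rfl⟩ := Ideal.Quotient.mk_surjective a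
    refine ⟨MvPowerSeries.constantCoeff f, ?_⟩
    have hf : f - MvPowerSeries.C (MvPowerSeries.constantCoeff f) ∈ mxR K n := by
      simp [mxR, RingHom.mem_ker]
    rw [span_range_apolarGen]
    exact Ideal.mem_map_of_mem (Ideal.Quotient.mk (annR F)) hf
  span_pow := by
    rw [span_range_apolarGen, ← Ideal.map_pow, Ideal.map_eq_bot_iff_le_ker, Ideal.mk_ker]
    exact mxR_pow_le_annR hF hd
  isDualizing a ha := by
    obtain ⟨f, rfl⟩ := Ideal.Quotient.mk_surjective a
    exact Ideal.Quotient.eq_zero_iff_mem.2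
      ((mem_annR_iff hF hd).2 fun u => ha (Ideal.Quotient.mk _ u))

theorem apolarFunctional_prod_linSubst (hFd : (F - Fd).totalDegree < d)
    (M : Matrix (Fin n) (Fin n) K) {t : Multiset (Fin n)} (ht : t.card = d) :
    apolarFunctional F (t.map (linSubst (apolarGen F) M)).prod =
      apolarPairing Fd (t.map (linSubst MvPowerSeries.X M)).prod := by
  have hmk : linSubst (apolarGen F) M =
      Ideal.Quotient.mk (annR F) ∘ linSubst MvPowerSeries.X M := by
    ext i
    simp only [linSubst, apolarGen, Function.comp_apply, map_sum]
    rfl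
  have hlinSubst (i) : linSubst MvPowerSeries.X M i ∈ mxR K n := by
    rw [mxR, ker_constantCoeff_eq_span_X]
    exact span_range_linSubst_le _ M (Ideal.subset_span ⟨i, rfl⟩)
  have hprod : (t.map (linSubst MvPowerSeries.X M)).prod ∈ mxR K n ^ d :=
    ht ▸ multiset_prod_map_mem_pow hlinSubst t
  have hlower : apolarPairing (F - Fd) (t.map (linSubst MvPowerSeries.X M)).prod = 0 :=
    apolarPairing_eq_zero_of_totalDegree_lt_order
      ((Nat.cast_lt.2 hFd).trans_le (le_order_of_mem_ker_constantCoeff_pow hprod))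
  rw [map_sub, LinearMap.sub_apply, sub_eq_zero] at hlower
  rw [← hlower, ← apolarFunctional_mk, hmk, ← Multiset.map_map, Multiset.prod_hom]

theorem apolarFunctional_prod_apolarGen (hFd : (F - Fd).totalDegree < d)
    {t : Multiset (Fin n)} (ht : t.card = d) :
    apolarFunctional F (t.map (apolarGen F)).prod =
      apolarPairing Fd (t.map MvPowerSeries.X).prod := by
  simpa only [linSubst_one] using apolarFunctional_prod_linSubst hFd 1 ht

theorem span_range_apolarGen_pow_ne_bot (hd : (d.factorial : K) ≠ 0) (hhom : Fd.IsHomogeneous d)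
    (hne : Fd ≠ 0) (hFd : (F - Fd).totalDegree < d) : span (range (apolarGen F)) ^ d ≠ ⊥ := by
  refine fun hbot => hne (eq_of_apolarPairing_prod_X_eq hd hhom
    (MvPolynomial.isHomogeneous_zero _ _ d) fun t ht => ?_)
  have hprod : (t.map (apolarGen F)).prod ∈ span (range (apolarGen F)) ^ d :=
    ht ▸ multiset_prod_map_mem_pow (fun i => Ideal.subset_span (Set.mem_range_self i)) t
  rw [hbot, Ideal.mem_bot] at hprod
  simp [← apolarFunctional_prod_apolarGen hFd ht, hprod]

theorem finrank_quotient_span_range_apolarGen_pow (F : MvPolynomial (Fin n) K) (k : ℕ) :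
    Module.finrank K ((MvPowerSeries (Fin n) K ⧸ annR F) ⧸ span (range (apolarGen F)) ^ k) =
      Module.finrank K (MvPowerSeries (Fin n) K ⧸ (annR F ⊔ mxR K n ^ k)) := by
  rw [span_range_apolarGen, ← Ideal.map_pow]
  exact (DoubleQuot.quotQuotEquivQuotSupₐ K (annR F) (mxR K n ^ k)).toLinearEquiv.finrank_eq

theorem totalDegree_le_of_totalDegree_sub_lt (hhom : Fd.IsHomogeneous d)
    (hFd : (F - Fd).totalDegree < d) : F.totalDegree ≤ d := by
  rw [← sub_add_cancel F Fd]
  exact (MvPolynomial.totalDegree_add _ _).trans (max_le hFd.le hhom.totalDegree_le)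

theorem isNondegenerateDualSystem_apolarGen (hd : ((d + 1).factorial : K) ≠ 0)
    (hhom : Fd.IsHomogeneous (d + 1)) (hne : Fd ≠ 0) (hFd : (F - Fd).totalDegree < d + 1)
    (hn : n ≤ hilbQ (annR F) d) :
    IsNondegenerateDualSystem d (apolarGen F) (apolarFunctional F) := by
  refine (isDualSystem_apolarGen (totalDegree_le_of_totalDegree_sub_lt hhom hFd)
    hd).isNondegenerateDualSystem (span_range_apolarGen_pow_ne_bot hd hhom hne hFd) ?_
  rwa [finrank_quotient_span_range_apolarGen_pow, finrank_quotient_span_range_apolarGen_pow,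
    Fintype.card_fin]

theorem projEquiv_iff_exists_apolarPairing_eq {H : MvPolynomial (Fin n) K}
    (hd : (d.factorial : K) ≠ 0) (hFd : Fd.IsHomogeneous d)
    (hH : H.IsHomogeneous d) :
    projEquiv Fd H ↔ ∃ φ : GL (Fin n) K, ∃ c ≠ 0, ∀ t : Multiset (Fin n), t.card = d →
      apolarPairing Fd (t.map (linSubst MvPowerSeries.X φ.val)).prod =
        c * apolarPairing H (t.map MvPowerSeries.X).prod :=
  exists_congr fun φ => exists_congr fun c => and_congr_right fun _ =>
    aeval_linSubst_X_eq_smul_iff hd hFd hH φ.val.transpose c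

end ApolarAlgebra

theorem aF_iso_iff_top_cubics_proj_equiv_general {K : Type*} [Field K] (h6 : (6 : K) ≠ 0) {n : ℕ}
    {F G F3 G3 : MvPolynomial (Fin n) K} (hF3 : F3.IsHomogeneous 3) (hF3ne : F3 ≠ 0)
    (hFtop : (F - F3).totalDegree ≤ 2) (hF2 : hilbQ (annR F) 2 = n) (hG3 : G3.IsHomogeneous 3)
    (hGtop : (G - G3).totalDegree ≤ 2) :
    Nonempty ((MvPowerSeries (Fin n) K ⧸ annR F) ≃ₐ[K] (MvPowerSeries (Fin n) K ⧸ annR G)) ↔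
      projEquiv F3 G3 := by
  have h3 : (Nat.factorial 3 : K) ≠ 0 := by simpa [Nat.factorial] using h6
  have h2 : (2 : K) ≠ 0 := fun h => h6 (by linear_combination 3 * h)
  have hFlt : (F - F3).totalDegree < 3 := Nat.lt_succ_of_le hFtop
  have hGlt : (G - G3).totalDegree < 3 := Nat.lt_succ_of_le hGtop
  rw [(isNondegenerateDualSystem_apolarGen h3 hF3 hF3ne hFlt hF2.ge).nonempty_algEquiv_iff h2
    (isDualSystem_apolarGen (totalDegree_le_of_totalDegree_sub_lt hG3 hGlt) h3),
    projEquiv_iff_exists_apolarPairing_eq h3 hF3 hG3]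
  refine exists_congr fun φ => exists_congr fun c => and_congr_right fun _ =>
    forall₂_congr fun t ht => ?_
  rw [apolarFunctional_prod_linSubst hFlt _ ht, apolarFunctional_prod_apolarGen hGlt ht]

/-- Let `F, G ∈ K[y_1,…,y_n]` be degree-three polynomials with top-degree cubic
forms `F_3, G_3`, such that `A_F` and `A_G` have Hilbert function `{1,n,n,1}`.
Then `A_F ≅ A_G` as `K`-algebras iff `F_3` and `G_3` are projectively
equivalent. -/
theorem aF_iso_iff_top_cubics_proj_equiv
    {K : Type*} [Field K] [IsAlgClosed K] [CharZero K] {n : ℕ}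
    (F G F3 G3 : MvPolynomial (Fin n) K)
    (hF3 : F3.IsHomogeneous 3) (hF3ne : F3 ≠ 0) (hFtop : (F - F3).totalDegree ≤ 2)
    (hG3 : G3.IsHomogeneous 3) (hG3ne : G3 ≠ 0) (hGtop : (G - G3).totalDegree ≤ 2)
    (hF0 : hilbQ (annR F) 0 = 1) (hF1 : hilbQ (annR F) 1 = n)
    (hF2 : hilbQ (annR F) 2 = n) (hFs : hilbQ (annR F) 3 = 1)
    (hFm : mxR K n ^ 4 ≤ annR F)
    (hG0 : hilbQ (annR G) 0 = 1) (hG1 : hilbQ (annR G) 1 = n)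
    (hG2 : hilbQ (annR G) 2 = n) (hGs : hilbQ (annR G) 3 = 1)
    (hGm : mxR K n ^ 4 ≤ annR G) :
    Nonempty ((MvPowerSeries (Fin n) K ⧸ annR F) ≃ₐ[K]
        (MvPowerSeries (Fin n) K ⧸ annR G)) ↔
      projEquiv F3 G3 := by
  exact aF_iso_iff_top_cubics_proj_equiv_general (by norm_num) hF3 hF3ne hFtop hF2 hG3 hGtop
end
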